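/- arXiv:2410.00671 — 3 statements merged into one kernel-verified Lean document; each statement's English description precedes it below -/
import Mathlib

section
/- Let L > 0, M > 0 and k ∈ ℝ satisfy M·L < 1/2 and |k| < 1. Then the closed-loop Bastin–Coron system with feedback gain k is exponentially stable in L²: there exist constants C ≥ 1 and μ > 0, depending only on L, M and k, such that every classical solution δ₊, δ₋ of the closed-loop system satisfies ∫₀ᴸ (δ₊(t,x)² + δ₋(t,x)²) dx ≤ C·exp(−μt)·∫₀ᴸ (δ₊(0,x)² + δ₋(0,x)²) dx for all t ≥ 0. -/
open MeasureTheory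

/-!
In the variables `s = δ₊ + δ₋`, `d = δ₊ - δ₋` the system reads `sₜ + dₓ + M s = 0`,
`dₜ + sₓ - M d = 0`, with `d(t, L) = 0` and `s(t, 0) = -r d(t, 0)`, `r = (1 + k)/(1 - k) > 0`.
When `k` is close to `1` no diagonal quadratic Lyapunov functional works, so a nonlocal one is used.
With `E = ∫ (s² + d²)`, `D(t, x) = ∫₀ˣ d`, `P = ∫ s D` and `S = ∫ s`,

  `V = E / 2 - M P + (M r / 2) S²` satisfies `V' = -r (S')²`, where `S' = d(t, 0) - M S`,

and `M L < 1/2` makes `V` equivalent to `E`, because `|P| ≤ (L / 2) E`.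

Two corrections make the dissipation strict. The multiplier functional `W = ∫ (L - x) s d` has
`W' = (L / 2)(1 + r²) d(t, 0)² - E / 2`. The trace is `d(t, 0) = S' + M S`, so `S²` must be damped
as well. Let `Q = ∫ (cos (M (L - x)) s - sin (M (L - x)) d)`, the pairing with a stationary adjoint
solution: `Q' = κ d(t, 0)` with `κ = cos (M L) + r sin (M L) > 0`, so
`(Q S)' = Q S' + κ (S' + M S) S`, and `-Q S` provides the damping `-κ M S²`.
For a suitable `K` and all small `ε > 0`, `U = V + ε W - ε K Q S` is equivalent to `E` and
`U' ≤ -(ε / 4) E` (`dissipation`), which gives exponential decay (`lyapunov_decay`).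

All time derivatives come from one integrated balance law, `balance_law`.
-/

/-- A classical solution of the Bastin–Coron system with time- and space-derivative
fields `dtp, dxp, dtm, dxm`. -/
def IsBastinCoronSolution (L M : ℝ) (δp δm dtp dxp dtm dxm : ℝ → ℝ → ℝ) : Prop :=
  (∀ t ∈ Set.Ici (0 : ℝ), ∀ x ∈ Set.Icc (0 : ℝ) L,
    HasDerivAt (fun s => δp s x) (dtp t x) t ∧
    HasDerivAt (fun y => δp t y) (dxp t x) x ∧
    HasDerivAt (fun s => δm s x) (dtm t x) t ∧
    HasDerivAt (fun y => δm t y) (dxm t x) x) ∧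
  ContinuousOn (fun p : ℝ × ℝ => (dtp p.1 p.2, dxp p.1 p.2, dtm p.1 p.2, dxm p.1 p.2))
    (Set.Ici 0 ×ˢ Set.Icc 0 L) ∧
  (∀ t ∈ Set.Ici (0 : ℝ), ∀ x ∈ Set.Icc (0 : ℝ) L,
    dtp t x + dxp t x + M * δm t x = 0 ∧
    dtm t x - dxm t x + M * δp t x = 0)

open Set Filter Topology

/-! ### Continuity, integrated balance laws and Cauchy–Schwarz -/

lemma continuousOn_of_partials {a : ℝ} {f ft fx : ℝ → ℝ → ℝ}
    (hft : ContinuousOn (fun p : ℝ × ℝ => ft p.1 p.2) (Ici 0 ×ˢ Icc 0 a))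
    (ht : ∀ t ∈ Ici (0 : ℝ), ∀ x ∈ Icc (0 : ℝ) a, HasDerivAt (fun τ => f τ x) (ft t x) t)
    (hx : ∀ t ∈ Ici (0 : ℝ), ∀ x ∈ Icc (0 : ℝ) a, HasDerivAt (fun y => f t y) (fx t x) x) :
    ContinuousOn (fun p : ℝ × ℝ => f p.1 p.2) (Ici 0 ×ˢ Icc 0 a) := by
  -- On each slab `[0, T] × [0, a]` the function is uniformly Lipschitz in time.
  have key : ∀ T : ℝ, ContinuousOn (fun p : ℝ × ℝ => f p.1 p.2) (Icc 0 T ×ˢ Icc 0 a) := by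
    intro T
    obtain ⟨B, hB⟩ := (isCompact_Icc.prod isCompact_Icc).exists_bound_of_continuousOn
      (hft.mono (prod_mono (fun t (h : t ∈ Icc 0 T) => h.1) Subset.rfl))
    refine continuousOn_prod_of_continuousOn_lipschitzOnWith _ B.toNNReal ?_ ?_
    · intro t h x hx'
      exact (hx t h.1 x hx').continuousAt.continuousWithinAt
    · intro x hx'
      refine (convex_Icc 0 T).lipschitzOnWith_of_nnnorm_hasDerivWithin_le
        (f' := fun t => ft t x) (fun t h => (ht t h.1 x hx').hasDerivWithinAt) ?_
      intro t h
      rw [← NNReal.coe_le_coe, coe_nnnorm]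
      exact (hB (t, x) ⟨h, hx'⟩).trans (Real.le_coe_toNNReal B)
  rintro ⟨t, x⟩ ⟨h1, h2⟩
  simp only [mem_Ici] at h1
  refine (key (t + 1) (t, x) ⟨⟨h1, by simp⟩, h2⟩).mono_of_mem_nhdsWithin ?_
  have : Iio (t + 1) ×ˢ (univ : Set ℝ) ∈ 𝓝 (t, x) :=
    (isOpen_Iio.prod isOpen_univ).mem_nhds ⟨by simp, trivial⟩
  filter_upwards [mem_nhdsWithin_of_mem_nhds this, self_mem_nhdsWithin] with p hp hpK
  exact ⟨⟨hpK.1, le_of_lt hp.1⟩, hpK.2⟩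

/-- The extension is `f` composed with the nearest-point projection onto `[0, ∞) × [0, a]`. -/
lemma exists_continuous_extension {a : ℝ} (ha : 0 ≤ a) {f : ℝ → ℝ → ℝ}
    (hf : ContinuousOn (fun p : ℝ × ℝ => f p.1 p.2) (Ici 0 ×ˢ Icc 0 a)) :
    ∃ g : ℝ → ℝ → ℝ, Continuous (Function.uncurry g) ∧
      ∀ t ∈ Ici (0 : ℝ), ∀ x ∈ Icc (0 : ℝ) a, g t x = f t x := by
  refine ⟨fun t x => f (max t 0) (max 0 (min x a)), ?_, ?_⟩
  · have : Continuous fun p : ℝ × ℝ => (max p.1 0, max 0 (min p.2 a)) := by fun_prop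
    exact hf.comp_continuous this fun p => ⟨le_max_right p.1 0, le_max_left _ _, by simp [ha]⟩
  · intro t ht x hx
    simp only [mem_Ici] at ht
    simp [ht, hx.1, hx.2]

lemma continuousOn_slice {a t : ℝ} (ht : t ∈ Ici (0 : ℝ)) {f : ℝ → ℝ → ℝ}
    (hf : ContinuousOn (fun p : ℝ × ℝ => f p.1 p.2) (Ici 0 ×ˢ Icc 0 a)) :
    ContinuousOn (f t) (Icc 0 a) :=
  hf.comp (f := fun x => (t, x)) (by fun_prop) fun _ hx => ⟨ht, hx⟩

/-- Integrated balance law: if `∂ₜF = -∂ₓG + R` on `(0, ∞) × [0, a]`, then `∫ F` is continuous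
on `[0, ∞)` and its derivative at positive times is the boundary flux plus `∫ R`. -/
lemma balance_law {a : ℝ} (ha : 0 ≤ a) {F Ft G Gx R : ℝ → ℝ → ℝ}
    (hF : ContinuousOn (fun p : ℝ × ℝ => F p.1 p.2) (Ici 0 ×ˢ Icc 0 a))
    (hFt : ContinuousOn (fun p : ℝ × ℝ => Ft p.1 p.2) (Ici 0 ×ˢ Icc 0 a))
    (hGx : ContinuousOn (fun p : ℝ × ℝ => Gx p.1 p.2) (Ici 0 ×ˢ Icc 0 a))
    (hF' : ∀ t ∈ Ioi (0 : ℝ), ∀ x ∈ Icc (0 : ℝ) a, HasDerivAt (fun τ => F τ x) (Ft t x) t)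
    (hG' : ∀ t ∈ Ioi (0 : ℝ), ∀ x ∈ Icc (0 : ℝ) a, HasDerivAt (fun y => G t y) (Gx t x) x)
    (hR : ∀ t ∈ Ioi (0 : ℝ), ∀ x ∈ Icc (0 : ℝ) a, Ft t x = -Gx t x + R t x) :
    ContinuousOn (fun t => ∫ x in (0 : ℝ)..a, F t x) (Ici 0) ∧
    ∀ t ∈ Ioi (0 : ℝ), HasDerivAt (fun τ => ∫ x in (0 : ℝ)..a, F τ x)
      (G t 0 - G t a + ∫ x in (0 : ℝ)..a, R t x) t := by
  have hu : uIcc 0 a = Icc 0 a := uIcc_of_le ha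
  constructor
  · obtain ⟨g, hg, hgF⟩ := exists_continuous_extension ha hF
    refine (intervalIntegral.continuous_parametric_intervalIntegral_of_continuous'
      (μ := volume) hg 0 a).continuousOn.congr ?_
    intro t ht
    exact intervalIntegral.integral_congr fun x hx => (hgF t ht x (hu ▸ hx)).symm
  · intro t ht
    have ht' : (0 : ℝ) < t := ht
    have int : ∀ {f : ℝ → ℝ → ℝ}, ContinuousOn (fun p : ℝ × ℝ => f p.1 p.2) (Ici 0 ×ˢ Icc 0 a) →
        ∀ τ ∈ Ici (0 : ℝ), IntervalIntegrable (f τ) volume 0 a := fun hf τ hτ =>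
      ContinuousOn.intervalIntegrable (by rw [hu]; exact continuousOn_slice hτ hf)
    obtain ⟨B, hB⟩ := (isCompact_Icc.prod isCompact_Icc).exists_bound_of_continuousOn
      (hFt.mono (prod_mono (fun τ (hτ : τ ∈ Icc 0 (t + 1)) => hτ.1) Subset.rfl))
    have hs : Ioo 0 (t + 1) ∈ 𝓝 t := Ioo_mem_nhds ht' (by linarith)
    have hsub : uIoc 0 a ⊆ Icc 0 a := hu ▸ uIoc_subset_uIcc
    have main := (intervalIntegral.hasDerivAt_integral_of_dominated_loc_of_deriv_le
      (μ := volume) (F := F) (F' := Ft) (bound := fun _ => B) (a := 0) (b := a) hs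
      (by
        filter_upwards [hs] with τ hτ
        exact (intervalIntegrable_iff.1 (int hF τ hτ.1.le)).aestronglyMeasurable)
      (int hF t ht'.le) (intervalIntegrable_iff.1 (int hFt t ht'.le)).aestronglyMeasurable
      (Eventually.of_forall fun x hx τ hτ => hB (τ, x) ⟨⟨hτ.1.le, hτ.2.le⟩, hsub hx⟩)
      intervalIntegrable_const
      (Eventually.of_forall fun x hx τ hτ => hF' τ hτ.1 x (hsub hx))).2
    have hGint : ∫ x in (0 : ℝ)..a, Gx t x = G t a - G t 0 :=
      intervalIntegral.integral_eq_sub_of_hasDerivAt (fun x hx => hG' t ht x (hu ▸ hx))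
        (int hGx t ht'.le)
    have hRint : ∫ x in (0 : ℝ)..a, R t x
        = (∫ x in (0 : ℝ)..a, Ft t x) + ∫ x in (0 : ℝ)..a, Gx t x := by
      rw [← intervalIntegral.integral_add (int hFt t ht'.le) (int hGx t ht'.le)]
      exact intervalIntegral.integral_congr fun x hx => by
        have := hR t ht x (hu ▸ hx)
        linarith
    have hval : G t 0 - G t a + ∫ x in (0 : ℝ)..a, R t x = ∫ x in (0 : ℝ)..a, Ft t x := by
      rw [hRint, hGint]; ring
    rw [hval]; exact main

/-- Cauchy–Schwarz against the constant `1`. -/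
lemma sq_integral_le {a : ℝ} (ha : 0 ≤ a) {f : ℝ → ℝ} (hf : ContinuousOn f (Icc 0 a)) :
    (∫ x in (0 : ℝ)..a, f x) ^ 2 ≤ a * ∫ x in (0 : ℝ)..a, f x ^ 2 := by
  rcases ha.eq_or_lt with rfl | hpos
  · simp
  have hu : uIcc 0 a = Icc 0 a := uIcc_of_le ha
  set c := (∫ x in (0 : ℝ)..a, f x) / a with hc
  have hca : c * a = ∫ x in (0 : ℝ)..a, f x := div_mul_cancel₀ _ hpos.ne'
  have i1 : IntervalIntegrable (fun x => f x ^ 2) volume 0 a :=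
    ContinuousOn.intervalIntegrable (by rw [hu]; fun_prop)
  have i2 : IntervalIntegrable (fun x => 2 * c * f x) volume 0 a :=
    ContinuousOn.intervalIntegrable (by rw [hu]; fun_prop)
  have h0 : 0 ≤ ∫ x in (0 : ℝ)..a, (f x ^ 2 - 2 * c * f x + c ^ 2) :=
    intervalIntegral.integral_nonneg ha fun x _ => by nlinarith [sq_nonneg (f x - c)]
  rw [intervalIntegral.integral_add (i1.sub i2) intervalIntegrable_const,
    intervalIntegral.integral_sub i1 i2, intervalIntegral.integral_const_mul,
    intervalIntegral.integral_const, ← hca] at h0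
  rw [← hca]
  simp only [smul_eq_mul, sub_zero] at h0
  nlinarith

/-! ### The system for the sum and the difference -/

/-- The closed-loop system in the variables `s = δ₊ + δ₋`, `d = δ₊ - δ₋`, where the boundary
condition at `0` becomes `s = -r d` with `r = (1 + k) / (1 - k)`. -/
structure SumDiffSolution (L M r : ℝ) (s d st sx dt dx : ℝ → ℝ → ℝ) : Prop where
  st_deriv : ∀ t ∈ Ici (0 : ℝ), ∀ x ∈ Icc (0 : ℝ) L, HasDerivAt (fun τ => s τ x) (st t x) t
  sx_deriv : ∀ t ∈ Ici (0 : ℝ), ∀ x ∈ Icc (0 : ℝ) L, HasDerivAt (fun y => s t y) (sx t x) x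
  dt_deriv : ∀ t ∈ Ici (0 : ℝ), ∀ x ∈ Icc (0 : ℝ) L, HasDerivAt (fun τ => d τ x) (dt t x) t
  dx_deriv : ∀ t ∈ Ici (0 : ℝ), ∀ x ∈ Icc (0 : ℝ) L, HasDerivAt (fun y => d t y) (dx t x) x
  st_cont : ContinuousOn (fun p : ℝ × ℝ => st p.1 p.2) (Ici 0 ×ˢ Icc 0 L)
  sx_cont : ContinuousOn (fun p : ℝ × ℝ => sx p.1 p.2) (Ici 0 ×ˢ Icc 0 L)
  dt_cont : ContinuousOn (fun p : ℝ × ℝ => dt p.1 p.2) (Ici 0 ×ˢ Icc 0 L)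
  dx_cont : ContinuousOn (fun p : ℝ × ℝ => dx p.1 p.2) (Ici 0 ×ˢ Icc 0 L)
  s_eq : ∀ t ∈ Ici (0 : ℝ), ∀ x ∈ Icc (0 : ℝ) L, st t x = -dx t x - M * s t x
  d_eq : ∀ t ∈ Ici (0 : ℝ), ∀ x ∈ Icc (0 : ℝ) L, dt t x = -sx t x + M * d t x
  bdry_L : ∀ t ∈ Ici (0 : ℝ), d t L = 0
  bdry_0 : ∀ t ∈ Ici (0 : ℝ), s t 0 = -r * d t 0

namespace SumDiffSolution

variable {L M r : ℝ} {s d st sx dt dx : ℝ → ℝ → ℝ}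

lemma s_cont (h : SumDiffSolution L M r s d st sx dt dx) :
    ContinuousOn (fun p : ℝ × ℝ => s p.1 p.2) (Ici 0 ×ˢ Icc 0 L) :=
  continuousOn_of_partials h.st_cont h.st_deriv h.sx_deriv

lemma d_cont (h : SumDiffSolution L M r s d st sx dt dx) :
    ContinuousOn (fun p : ℝ × ℝ => d p.1 p.2) (Ici 0 ×ˢ Icc 0 L) :=
  continuousOn_of_partials h.dt_cont h.dt_deriv h.dx_deriv

/-- The primitive `D(t, x) = ∫₀ˣ d(t, y) dy`. It is built from a continuous extension of `d`, so
that the two-sided `x`-derivative also exists at the endpoints of `[0, L]`. -/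
lemma exists_primitive (hL : 0 < L) (h : SumDiffSolution L M r s d st sx dt dx) :
    ∃ D : ℝ → ℝ → ℝ,
      ContinuousOn (fun p : ℝ × ℝ => D p.1 p.2) (Ici 0 ×ˢ Icc 0 L) ∧
      (∀ t ∈ Ici (0 : ℝ), ∀ x ∈ Icc (0 : ℝ) L, D t x = ∫ y in (0 : ℝ)..x, d t y) ∧
      (∀ t ∈ Ioi (0 : ℝ), ∀ x ∈ Icc (0 : ℝ) L,
        HasDerivAt (fun τ => D τ x) (s t 0 - s t x + M * D t x) t) ∧
      (∀ t ∈ Ici (0 : ℝ), ∀ x ∈ Icc (0 : ℝ) L, HasDerivAt (fun y => D t y) (d t x) x) := by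
  obtain ⟨g, hg, hgd⟩ := exists_continuous_extension hL.le h.d_cont
  have hD : ∀ t ∈ Ici (0 : ℝ), ∀ x ∈ Icc (0 : ℝ) L,
      ∫ y in (0 : ℝ)..x, g t y = ∫ y in (0 : ℝ)..x, d t y := fun t ht x hx =>
    intervalIntegral.integral_congr fun y hy => by
      rw [uIcc_of_le hx.1] at hy
      exact hgd t ht y ⟨hy.1, hy.2.trans hx.2⟩
  refine ⟨fun t x => ∫ y in (0 : ℝ)..x, g t y,
    (intervalIntegral.continuous_parametric_primitive_of_continuous hg).continuousOn, hD, ?_, ?_⟩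
  · intro t ht x hx
    have ht' : (0 : ℝ) < t := ht
    have hsub : Icc 0 x ⊆ Icc 0 L := Icc_subset_Icc_right hx.2
    have hsub2 : Ici (0 : ℝ) ×ˢ Icc 0 x ⊆ Ici 0 ×ˢ Icc 0 L := prod_mono Subset.rfl hsub
    have := (balance_law hx.1 (F := d) (Ft := dt) (G := s) (Gx := sx) (R := fun t x => M * d t x)
      (h.d_cont.mono hsub2) (h.dt_cont.mono hsub2) (h.sx_cont.mono hsub2)
      (fun t ht y hy => h.dt_deriv t (Ioi_subset_Ici_self ht) y (hsub hy))
      (fun t ht y hy => h.sx_deriv t (Ioi_subset_Ici_self ht) y (hsub hy))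
      (fun t ht y hy => h.d_eq t (Ioi_subset_Ici_self ht) y (hsub hy))).2 t ht
    rw [intervalIntegral.integral_const_mul, ← hD t ht'.le x hx] at this
    refine this.congr_of_eventuallyEq ?_
    filter_upwards [Ioi_mem_nhds ht'] with τ hτ
    exact hD τ (Ioi_subset_Ici_self hτ) x hx
  · intro t ht x hx
    have hgt : Continuous (g t) := hg.comp (f := fun x => (t, x)) (by fun_prop)
    rw [← hgd t ht x hx]
    exact intervalIntegral.integral_hasDerivAt_right (hgt.intervalIntegrable _ _)
      (hgt.stronglyMeasurableAtFilter _ _) hgt.continuousAt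

lemma energy_balance (hL : 0 < L) (h : SumDiffSolution L M r s d st sx dt dx) :
    ContinuousOn (fun t => ∫ x in (0 : ℝ)..L, (s t x ^ 2 + d t x ^ 2)) (Ici 0) ∧
    ∀ t ∈ Ioi (0 : ℝ), HasDerivAt (fun t => ∫ x in (0 : ℝ)..L, (s t x ^ 2 + d t x ^ 2))
      (-2 * r * d t 0 ^ 2 + 2 * M * ∫ x in (0 : ℝ)..L, (d t x ^ 2 - s t x ^ 2)) t := by
  have hs := h.s_cont
  have hd := h.d_cont
  have hst := h.st_cont
  have hsx := h.sx_cont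
  have hdt := h.dt_cont
  have hdx := h.dx_cont
  have key := balance_law hL.le (F := fun t x => s t x ^ 2 + d t x ^ 2)
    (Ft := fun t x => 2 * s t x * st t x + 2 * d t x * dt t x)
    (G := fun t x => 2 * (s t x * d t x))
    (Gx := fun t x => 2 * (sx t x * d t x + s t x * dx t x))
    (R := fun t x => 2 * M * (d t x ^ 2 - s t x ^ 2))
    (by fun_prop) (by fun_prop) (by fun_prop)
    (fun t ht x hx => by
      have h1 := h.st_deriv t (Ioi_subset_Ici_self ht) x hx
      have h2 := h.dt_deriv t (Ioi_subset_Ici_self ht) x hx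
      exact ((h1.pow 2).add (h2.pow 2)).congr_deriv (by norm_num))
    (fun t ht x hx =>
      ((h.sx_deriv t (Ioi_subset_Ici_self ht) x hx).mul (h.dx_deriv t (Ioi_subset_Ici_self ht) x hx)).const_mul 2)
    (fun t ht x hx => by
      simp only [h.s_eq t (Ioi_subset_Ici_self ht) x hx, h.d_eq t (Ioi_subset_Ici_self ht) x hx]; ring)
  refine ⟨key.1, fun t ht => (key.2 t ht).congr_deriv ?_⟩
  rw [intervalIntegral.integral_const_mul, h.bdry_L t (Ioi_subset_Ici_self ht), h.bdry_0 t (Ioi_subset_Ici_self ht)]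
  ring

/-- The indefinite term `∫ (d² - s²)` is the one in `energy_balance`, so that
`½ ∫ (s² + d²) - M ∫ s D` changes only through terms containing the trace `d(t, 0)`. -/
lemma cross_balance (hL : 0 < L) (h : SumDiffSolution L M r s d st sx dt dx) {D : ℝ → ℝ → ℝ}
    (hD : ContinuousOn (fun p : ℝ × ℝ => D p.1 p.2) (Ici 0 ×ˢ Icc 0 L))
    (hDint : ∀ t ∈ Ici (0 : ℝ), ∀ x ∈ Icc (0 : ℝ) L, D t x = ∫ y in (0 : ℝ)..x, d t y)
    (hDt : ∀ t ∈ Ioi (0 : ℝ), ∀ x ∈ Icc (0 : ℝ) L,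
      HasDerivAt (fun τ => D τ x) (s t 0 - s t x + M * D t x) t)
    (hDx : ∀ t ∈ Ici (0 : ℝ), ∀ x ∈ Icc (0 : ℝ) L, HasDerivAt (fun y => D t y) (d t x) x) :
    ContinuousOn (fun t => ∫ x in (0 : ℝ)..L, s t x * D t x) (Ici 0) ∧
    ∀ t ∈ Ioi (0 : ℝ), HasDerivAt (fun t => ∫ x in (0 : ℝ)..L, s t x * D t x)
      ((∫ x in (0 : ℝ)..L, (d t x ^ 2 - s t x ^ 2))
        - r * d t 0 * ∫ x in (0 : ℝ)..L, s t x) t := by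
  have hs := h.s_cont
  have hd := h.d_cont
  have hst := h.st_cont
  have hdx := h.dx_cont
  have hs0 : ContinuousOn (fun p : ℝ × ℝ => s p.1 0) (Ici 0 ×ˢ Icc 0 L) :=
    h.s_cont.comp (f := fun p : ℝ × ℝ => (p.1, (0 : ℝ))) (by fun_prop)
      fun p hp => ⟨hp.1, le_rfl, hL.le⟩
  have key := balance_law hL.le (F := fun t x => s t x * D t x)
    (Ft := fun t x => st t x * D t x + s t x * (s t 0 - s t x + M * D t x))
    (G := fun t x => d t x * D t x)
    (Gx := fun t x => dx t x * D t x + d t x * d t x)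
    (R := fun t x => (d t x ^ 2 - s t x ^ 2) + s t 0 * s t x)
    (by fun_prop)
    ((hst.mul hD).add (hs.mul ((hs0.sub hs).add (continuousOn_const.mul hD)))) (by fun_prop)
    (fun t ht x hx => (h.st_deriv t (Ioi_subset_Ici_self ht) x hx).mul (hDt t ht x hx))
    (fun t ht x hx => (h.dx_deriv t (Ioi_subset_Ici_self ht) x hx).mul (hDx t (Ioi_subset_Ici_self ht) x hx))
    (fun t ht x hx => by
      simp only [h.s_eq t (Ioi_subset_Ici_self ht) x hx]; ring)
  refine ⟨key.1, fun t ht => (key.2 t ht).congr_deriv ?_⟩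
  have cs := continuousOn_slice (Ioi_subset_Ici_self ht) hs
  have cd := continuousOn_slice (Ioi_subset_Ici_self ht) hd
  rw [intervalIntegral.integral_add, intervalIntegral.integral_const_mul,
    h.bdry_L t (Ioi_subset_Ici_self ht), h.bdry_0 t (Ioi_subset_Ici_self ht),
    hDint t (Ioi_subset_Ici_self ht) 0 ⟨le_rfl, hL.le⟩, intervalIntegral.integral_same]
  · ring
  · exact ContinuousOn.intervalIntegrable (by rw [uIcc_of_le hL.le]; fun_prop)
  · exact ContinuousOn.intervalIntegrable (by rw [uIcc_of_le hL.le]; fun_prop)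

lemma mean_balance (hL : 0 < L) (h : SumDiffSolution L M r s d st sx dt dx) :
    ContinuousOn (fun t => ∫ x in (0 : ℝ)..L, s t x) (Ici 0) ∧
    ∀ t ∈ Ioi (0 : ℝ), HasDerivAt (fun t => ∫ x in (0 : ℝ)..L, s t x)
      (d t 0 - M * ∫ x in (0 : ℝ)..L, s t x) t := by
  have key := balance_law hL.le (F := s) (Ft := st) (G := d) (Gx := dx)
    (R := fun t x => -M * s t x) h.s_cont h.st_cont h.dx_cont
    (fun t ht => h.st_deriv t (Ioi_subset_Ici_self ht)) (fun t ht => h.dx_deriv t (Ioi_subset_Ici_self ht))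
    (fun t ht x hx => by rw [h.s_eq t (Ioi_subset_Ici_self ht) x hx]; ring)
  refine ⟨key.1, fun t ht => (key.2 t ht).congr_deriv ?_⟩
  rw [intervalIntegral.integral_const_mul, h.bdry_L t (Ioi_subset_Ici_self ht)]
  ring

/-- The multiplier `L - x` produces full interior damping, at the price of the trace `d(t, 0)²`. -/
lemma multiplier_balance (hL : 0 < L) (h : SumDiffSolution L M r s d st sx dt dx) :
    ContinuousOn (fun t => ∫ x in (0 : ℝ)..L, (L - x) * (s t x * d t x)) (Ici 0) ∧
    ∀ t ∈ Ioi (0 : ℝ), HasDerivAt (fun t => ∫ x in (0 : ℝ)..L, (L - x) * (s t x * d t x))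
      (L / 2 * (1 + r ^ 2) * d t 0 ^ 2
        - 1 / 2 * ∫ x in (0 : ℝ)..L, (s t x ^ 2 + d t x ^ 2)) t := by
  have hs := h.s_cont
  have hd := h.d_cont
  have hst := h.st_cont
  have hsx := h.sx_cont
  have hdt := h.dt_cont
  have hdx := h.dx_cont
  have key := balance_law hL.le (F := fun t x => (L - x) * (s t x * d t x))
    (Ft := fun t x => (L - x) * (st t x * d t x + s t x * dt t x))
    (G := fun t x => (L - x) * ((s t x ^ 2 + d t x ^ 2) / 2))
    (Gx := fun t x => -1 * ((s t x ^ 2 + d t x ^ 2) / 2)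
      + (L - x) * (s t x * sx t x + d t x * dx t x))
    (R := fun t x => -(1 / 2) * (s t x ^ 2 + d t x ^ 2))
    (by fun_prop) (by fun_prop) (by fun_prop)
    (fun t ht x hx =>
      ((h.st_deriv t (Ioi_subset_Ici_self ht) x hx).mul (h.dt_deriv t (Ioi_subset_Ici_self ht) x hx)).const_mul _)
    (fun t ht x hx => by
      have h1 := h.sx_deriv t (Ioi_subset_Ici_self ht) x hx
      have h2 := h.dx_deriv t (Ioi_subset_Ici_self ht) x hx
      have h3 : HasDerivAt (fun y : ℝ => L - y) (-1) x := (hasDerivAt_id x).const_sub L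
      have h4 : HasDerivAt (fun y : ℝ => (s t y ^ 2 + d t y ^ 2) / 2)
          (s t x * sx t x + d t x * dx t x) x :=
        (((h1.pow 2).add (h2.pow 2)).div_const 2).congr_deriv (by norm_num; ring)
      exact h3.mul h4)
    (fun t ht x hx => by
      simp only [h.s_eq t (Ioi_subset_Ici_self ht) x hx, h.d_eq t (Ioi_subset_Ici_self ht) x hx]; ring)
  refine ⟨key.1, fun t ht => (key.2 t ht).congr_deriv ?_⟩
  rw [intervalIntegral.integral_const_mul, h.bdry_0 t (Ioi_subset_Ici_self ht)]
  ring

/-- Testing against `(cos M(L-x), -sin M(L-x))`, a solution of the stationary adjoint system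
whose second component vanishes at `L`, leaves only a boundary term at `0`. -/
lemma adjoint_balance (hL : 0 < L) (h : SumDiffSolution L M r s d st sx dt dx) :
    ContinuousOn (fun t => ∫ x in (0 : ℝ)..L,
      (Real.cos (M * (L - x)) * s t x - Real.sin (M * (L - x)) * d t x)) (Ici 0) ∧
    ∀ t ∈ Ioi (0 : ℝ), HasDerivAt (fun t => ∫ x in (0 : ℝ)..L,
        (Real.cos (M * (L - x)) * s t x - Real.sin (M * (L - x)) * d t x))
      ((Real.cos (M * L) + r * Real.sin (M * L)) * d t 0) t := by
  have hs := h.s_cont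
  have hd := h.d_cont
  have hst := h.st_cont
  have hsx := h.sx_cont
  have hdt := h.dt_cont
  have hdx := h.dx_cont
  have key := balance_law hL.le
    (F := fun t x => Real.cos (M * (L - x)) * s t x - Real.sin (M * (L - x)) * d t x)
    (Ft := fun t x => Real.cos (M * (L - x)) * st t x - Real.sin (M * (L - x)) * dt t x)
    (G := fun t x => Real.cos (M * (L - x)) * d t x - Real.sin (M * (L - x)) * s t x)
    (Gx := fun t x =>
      (M * Real.sin (M * (L - x)) * d t x + Real.cos (M * (L - x)) * dx t x)
        - (-M * Real.cos (M * (L - x)) * s t x + Real.sin (M * (L - x)) * sx t x))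
    (R := fun _ _ => 0)
    (by fun_prop) (by fun_prop) (by fun_prop)
    (fun t ht x hx => ((h.st_deriv t (Ioi_subset_Ici_self ht) x hx).const_mul _).sub
      ((h.dt_deriv t (Ioi_subset_Ici_self ht) x hx).const_mul _))
    (fun t ht x hx => by
      have h1 := h.sx_deriv t (Ioi_subset_Ici_self ht) x hx
      have h2 := h.dx_deriv t (Ioi_subset_Ici_self ht) x hx
      have h3 : HasDerivAt (fun y : ℝ => M * (L - y)) (-M) x :=
        (((hasDerivAt_id x).const_sub L).const_mul M).congr_deriv (by ring)
      exact ((h3.cos.mul h2).sub (h3.sin.mul h1)).congr_deriv (by ring))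
    (fun t ht x hx => by
      simp only [h.s_eq t (Ioi_subset_Ici_self ht) x hx, h.d_eq t (Ioi_subset_Ici_self ht) x hx]; ring)
  refine ⟨key.1, fun t ht => (key.2 t ht).congr_deriv ?_⟩
  rw [h.bdry_L t (Ioi_subset_Ici_self ht), h.bdry_0 t (Ioi_subset_Ici_self ht)]
  simp
  ring

end SumDiffSolution

/-! ### Lyapunov estimate for scalar quantities -/

lemma decay_of_deriv_le {U U' : ℝ → ℝ} {μ : ℝ} (hc : ContinuousOn U (Ici 0))
    (hU : ∀ t ∈ Ioi (0 : ℝ), HasDerivAt U (U' t) t)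
    (hle : ∀ t ∈ Ioi (0 : ℝ), U' t ≤ -μ * U t) {t : ℝ} (ht : t ∈ Ici (0 : ℝ)) :
    U t ≤ Real.exp (-μ * t) * U 0 := by
  have hder : ∀ t ∈ Ioi (0 : ℝ), HasDerivAt (fun t => Real.exp (μ * t) * U t)
      (Real.exp (μ * t) * (μ * U t + U' t)) t := fun t ht => by
    have h1 : HasDerivAt (fun t : ℝ => μ * t) μ t := by
      simpa using (hasDerivAt_id t).const_mul μ
    exact (h1.exp.mul (hU t ht)).congr_deriv (by ring)
  have anti : AntitoneOn (fun t => Real.exp (μ * t) * U t) (Ici 0) := by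
    refine antitoneOn_of_deriv_nonpos (convex_Ici 0) (by fun_prop) ?_ ?_
    · rw [interior_Ici]
      exact fun t ht => (hder t ht).differentiableAt.differentiableWithinAt
    · rw [interior_Ici]
      intro t ht
      rw [(hder t ht).deriv]
      exact mul_nonpos_of_nonneg_of_nonpos (Real.exp_pos _).le (by linarith [hle t ht])
  have h0 := anti self_mem_Ici ht ht
  simp only [mul_zero, Real.exp_zero, one_mul] at h0
  have h1 : Real.exp (-μ * t) * Real.exp (μ * t) = 1 := by
    rw [← Real.exp_add]; simp
  calc U t = Real.exp (-μ * t) * (Real.exp (μ * t) * U t) := by rw [← mul_assoc, h1, one_mul]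
    _ ≤ _ := mul_le_mul_of_nonneg_left h0 (Real.exp_pos _).le

/-- Pointwise dissipation: `g = Σ'`, so that the trace is `d(t, 0) = g + M Σ`. The constant `K`
is chosen so that the `Σ²` terms cancel, and `ε` is small enough to absorb the rest. -/
lemma dissipation {L M r κ K ε E g S Q : ℝ} (hL : 0 < L) (hr : 0 < r) (hε : 0 < ε)
    (hE : 0 ≤ E) (hK : K * κ = L * (1 + r ^ 2) * M)
    (e1 : ε * (L * (1 + r ^ 2)) ≤ r / 2) (e2 : ε * (4 * K ^ 2 * (1 + κ ^ 2) * L) ≤ r)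
    (hS : S ^ 2 ≤ L * E) (hQ : Q ^ 2 ≤ L * E) :
    -r * g ^ 2 + ε * (L / 2 * (1 + r ^ 2) * (g + M * S) ^ 2 - 1 / 2 * E)
      - ε * K * (Q * g + κ * (g + M * S) * S) ≤ -(ε / 4) * E := by
  have hZ : (Q + κ * S) ^ 2 ≤ 2 * (1 + κ ^ 2) * (L * E) := by
    have h1 : (Q + κ * S) ^ 2 ≤ (1 + κ ^ 2) * (Q ^ 2 + S ^ 2) := by
      nlinarith [sq_nonneg (κ * Q - S)]
    have h2 : (1 + κ ^ 2) * (Q ^ 2 + S ^ 2) ≤ (1 + κ ^ 2) * (2 * (L * E)) :=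
      mul_le_mul_of_nonneg_left (by linarith) (by positivity)
    linarith
  have hy : (ε * K * (Q + κ * S)) ^ 2 ≤ r * (ε / 2 * E) := by
    calc (ε * K * (Q + κ * S)) ^ 2 = (ε * K) ^ 2 * (Q + κ * S) ^ 2 := by ring
      _ ≤ (ε * K) ^ 2 * (2 * (1 + κ ^ 2) * (L * E)) :=
        mul_le_mul_of_nonneg_left hZ (by positivity)
      _ = ε * (4 * K ^ 2 * (1 + κ ^ 2) * L) * (ε / 2 * E) := by ring
      _ ≤ _ := mul_le_mul_of_nonneg_right e2 (by positivity)
  set y := ε * K * (Q + κ * S) with hydef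
  have hcross : -(y * g) ≤ r / 2 * g ^ 2 + ε / 4 * E := by
    refine le_of_mul_le_mul_left ?_ hr
    nlinarith [sq_nonneg (r * g + y)]
  have htrace : ε * (L / 2 * (1 + r ^ 2) * (g + M * S) ^ 2)
      ≤ r / 2 * g ^ 2 + ε * (L * (1 + r ^ 2)) * (M * S) ^ 2 := by
    have h1 : ε * (L / 2 * (1 + r ^ 2) * (g + M * S) ^ 2)
        ≤ ε * (L * (1 + r ^ 2)) * (g ^ 2 + (M * S) ^ 2) := by
      have : (g + M * S) ^ 2 ≤ 2 * (g ^ 2 + (M * S) ^ 2) := by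
        nlinarith [sq_nonneg (g - M * S)]
      calc ε * (L / 2 * (1 + r ^ 2) * (g + M * S) ^ 2)
          = ε * (L / 2 * (1 + r ^ 2)) * (g + M * S) ^ 2 := by ring
        _ ≤ ε * (L / 2 * (1 + r ^ 2)) * (2 * (g ^ 2 + (M * S) ^ 2)) :=
          mul_le_mul_of_nonneg_left this (by positivity)
        _ = _ := by ring
    nlinarith [mul_le_mul_of_nonneg_right e1 (sq_nonneg g)]
  have hsplit : ε * K * (Q * g + κ * (g + M * S) * S)
      = y * g + ε * (L * (1 + r ^ 2)) * (M * S) ^ 2 := by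
    have : ε * (L * (1 + r ^ 2)) * (M * S) ^ 2 = ε * (K * κ) * M * S ^ 2 := by rw [hK]; ring
    rw [this, hydef]; ring
  rw [hsplit]
  linarith

/-- Exponential decay for the scalar quantities `E = ∫ (s² + d²)`, `P = ∫ s D`, `S = ∫ s`,
`W = ∫ (L - x) s d`, `Q` (the adjoint pairing), with `e = d(·, 0)` and `B = ∫ (d² - s²)`. -/
lemma lyapunov_decay {L M r κ : ℝ} (hL : 0 < L) (hM : 0 < M) (hML : M * L < 1 / 2)
    (hr : 0 < r) (hκ : 0 < κ) :
    ∃ C ≥ (1 : ℝ), ∃ μ > (0 : ℝ), ∀ E P S W Q e B : ℝ → ℝ,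
      ContinuousOn E (Ici 0) → ContinuousOn P (Ici 0) → ContinuousOn S (Ici 0) →
      ContinuousOn W (Ici 0) → ContinuousOn Q (Ici 0) →
      (∀ t ∈ Ioi (0 : ℝ), HasDerivAt E (-2 * r * e t ^ 2 + 2 * M * B t) t) →
      (∀ t ∈ Ioi (0 : ℝ), HasDerivAt P (B t - r * e t * S t) t) →
      (∀ t ∈ Ioi (0 : ℝ), HasDerivAt S (e t - M * S t) t) →
      (∀ t ∈ Ioi (0 : ℝ), HasDerivAt W (L / 2 * (1 + r ^ 2) * e t ^ 2 - 1 / 2 * E t) t) →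
      (∀ t ∈ Ioi (0 : ℝ), HasDerivAt Q (κ * e t) t) →
      (∀ t ∈ Ici (0 : ℝ), 0 ≤ E t) →
      (∀ t ∈ Ici (0 : ℝ), |P t| ≤ L / 2 * E t) →
      (∀ t ∈ Ici (0 : ℝ), S t ^ 2 ≤ L * E t) →
      (∀ t ∈ Ici (0 : ℝ), |W t| ≤ L / 2 * E t) →
      (∀ t ∈ Ici (0 : ℝ), Q t ^ 2 ≤ L * E t) →
      ∀ t ∈ Ici (0 : ℝ), E t ≤ C * Real.exp (-μ * t) * E 0 := by
  obtain ⟨K, hK0, hK⟩ : ∃ K : ℝ, 0 < K ∧ K * κ = L * (1 + r ^ 2) * M :=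
    ⟨L * (1 + r ^ 2) * M / κ, by positivity, by field_simp⟩
  obtain ⟨ε, hε, e1, e2, e3⟩ : ∃ ε : ℝ, 0 < ε ∧ ε * (L * (1 + r ^ 2)) ≤ r / 2 ∧
      ε * (4 * K ^ 2 * (1 + κ ^ 2) * L) ≤ r ∧ ε * (L / 2 + K * L) ≤ 1 / 8 := by
    refine ⟨min (r / 2 / (L * (1 + r ^ 2)))
      (min (r / (4 * K ^ 2 * (1 + κ ^ 2) * L)) (1 / 8 / (L / 2 + K * L))), by positivity, ?_, ?_, ?_⟩
    · exact (le_div_iff₀ (by positivity)).1 (min_le_left _ _)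
    · exact (le_div_iff₀ (by positivity)).1 ((min_le_right _ _).trans (min_le_left _ _))
    · exact (le_div_iff₀ (by positivity)).1 ((min_le_right _ _).trans (min_le_right _ _))
  set c := 7 / 8 + M * r / 2 * L with hc
  have hc1 : 7 / 8 ≤ c := by rw [hc]; linarith [show 0 < M * r / 2 * L by positivity]
  have hc0 : 0 < c := by linarith
  refine ⟨8 * c, by linarith, ε / 4 / c, by positivity, ?_⟩
  intro E P S W Q e B cE cP cS cW cQ dE dP dS dW dQ hE hP hS hW hQ t ht
  set U : ℝ → ℝ := fun t => 1 / 2 * E t - M * P t + M * r / 2 * S t ^ 2 + ε * W t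
    - ε * K * (Q t * S t) with hU
  have cU : ContinuousOn U (Ici 0) := by fun_prop
  have dU : ∀ t ∈ Ioi (0 : ℝ), HasDerivAt U
      (-r * (e t - M * S t) ^ 2 + ε * (L / 2 * (1 + r ^ 2) * e t ^ 2 - 1 / 2 * E t)
        - ε * K * (Q t * (e t - M * S t) + κ * e t * S t)) t := fun t ht =>
    ((((((dE t ht).const_mul (1 / 2)).sub ((dP t ht).const_mul M)).add
      (((dS t ht).pow 2).const_mul (M * r / 2))).add ((dW t ht).const_mul ε)).sub
      (((dQ t ht).mul (dS t ht)).const_mul (ε * K))).congr_deriv (by norm_num; ring)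
  have hMP : ∀ t ∈ Ici (0 : ℝ), |M * P t| ≤ 1 / 4 * E t := fun t ht => by
    rw [abs_mul, abs_of_pos hM]
    have h1 := mul_le_mul_of_nonneg_left (hP t ht) hM.le
    have h2 := mul_le_mul_of_nonneg_right hML.le (hE t ht)
    linarith
  have hpert : ∀ t ∈ Ici (0 : ℝ), |ε * W t - ε * K * (Q t * S t)| ≤ 1 / 8 * E t := fun t ht => by
    have hQS : |Q t * S t| ≤ L * E t := by
      have h1 := hQ t ht
      have h2 := hS t ht
      rw [abs_le]
      constructor <;> nlinarith [sq_nonneg (Q t + S t), sq_nonneg (Q t - S t)]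
    calc |ε * W t - ε * K * (Q t * S t)| ≤ |ε * W t| + |ε * K * (Q t * S t)| := abs_sub _ _
      _ = ε * |W t| + ε * K * |Q t * S t| := by
        rw [abs_mul, abs_mul (ε * K), abs_of_pos hε, abs_of_pos (mul_pos hε hK0)]
      _ ≤ ε * (L / 2 * E t) + ε * K * (L * E t) :=
        add_le_add (mul_le_mul_of_nonneg_left (hW t ht) hε.le)
          (mul_le_mul_of_nonneg_left hQS (mul_pos hε hK0).le)
      _ = ε * (L / 2 + K * L) * E t := by ring
      _ ≤ _ := mul_le_mul_of_nonneg_right e3 (hE t ht)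
  have lower : ∀ t ∈ Ici (0 : ℝ), E t ≤ 8 * U t := fun t ht => by
    have h1 := abs_le.1 (hMP t ht)
    have h2 := abs_le.1 (hpert t ht)
    have h3 : 0 ≤ M * r / 2 * S t ^ 2 := by positivity
    simp only [hU]; linarith
  have upper : ∀ t ∈ Ici (0 : ℝ), U t ≤ c * E t := fun t ht => by
    have h1 := abs_le.1 (hMP t ht)
    have h2 := abs_le.1 (hpert t ht)
    have h3 : M * r / 2 * S t ^ 2 ≤ M * r / 2 * (L * E t) :=
      mul_le_mul_of_nonneg_left (hS t ht) (by positivity)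
    simp only [hU, hc]; linarith
  have hdec : ∀ t ∈ Ioi (0 : ℝ),
      -r * (e t - M * S t) ^ 2 + ε * (L / 2 * (1 + r ^ 2) * e t ^ 2 - 1 / 2 * E t)
        - ε * K * (Q t * (e t - M * S t) + κ * e t * S t) ≤ -(ε / 4 / c) * U t := fun t ht => by
    have ht' := Ioi_subset_Ici_self ht
    have h1 := dissipation (M := M) (g := e t - M * S t) hL hr hε (hE t ht') hK e1 e2
      (hS t ht') (hQ t ht')
    rw [sub_add_cancel] at h1
    have h2 : ε / 4 / c * U t ≤ ε / 4 * E t := by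
      calc ε / 4 / c * U t ≤ ε / 4 / c * (c * E t) :=
            mul_le_mul_of_nonneg_left (upper t ht') (by positivity)
        _ = _ := by field_simp
    linarith
  have hfin := decay_of_deriv_le cU dU hdec ht
  calc E t ≤ 8 * U t := lower t ht
    _ ≤ 8 * (Real.exp (-(ε / 4 / c) * t) * U 0) := by linarith
    _ ≤ 8 * (Real.exp (-(ε / 4 / c) * t) * (c * E 0)) := by
      have := mul_le_mul_of_nonneg_left (upper 0 self_mem_Ici) (Real.exp_pos (-(ε / 4 / c) * t)).le
      linarith
    _ = _ := by ring

/-! ### Bounds for the functionals and decay -/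

namespace SumDiffSolution

variable {L M r : ℝ}

lemma abs_integral_le {f g : ℝ → ℝ} (hL : 0 < L) (hf : ContinuousOn f (Icc 0 L))
    (hg : ContinuousOn g (Icc 0 L)) (hfg : ∀ x ∈ Icc 0 L, |f x| ≤ g x) :
    |∫ x in (0 : ℝ)..L, f x| ≤ ∫ x in (0 : ℝ)..L, g x := by
  have hu := uIcc_of_le hL.le
  refine (intervalIntegral.abs_integral_le_integral_abs hL.le).trans ?_
  exact intervalIntegral.integral_mono_on hL.le
    (ContinuousOn.intervalIntegrable (by rw [hu]; fun_prop))
    (ContinuousOn.intervalIntegrable (by rwa [hu])) hfg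

lemma sq_integral_le_energy {f g : ℝ → ℝ} (hL : 0 < L) (hf : ContinuousOn f (Icc 0 L))
    (hg : ContinuousOn g (Icc 0 L)) (hfg : ∀ x ∈ Icc 0 L, f x ^ 2 ≤ g x) :
    (∫ x in (0 : ℝ)..L, f x) ^ 2 ≤ L * ∫ x in (0 : ℝ)..L, g x := by
  have hu := uIcc_of_le hL.le
  refine (sq_integral_le hL.le hf).trans (mul_le_mul_of_nonneg_left ?_ hL.le)
  exact intervalIntegral.integral_mono_on hL.le
    (ContinuousOn.intervalIntegrable (by rw [hu]; fun_prop))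
    (ContinuousOn.intervalIntegrable (by rwa [hu])) hfg

/-- `|∫ s D| ≤ (L/2) ∫ (s² + d²)` for the primitive `D` of `d`: by Cauchy–Schwarz
`D² ≤ L J` with `J = ∫ d²`, hence `2|s D| ≤ L s² + J`. The functions `s`, `d` are called `f`, `g`. -/
lemma cross_bound {f g D : ℝ → ℝ} (hL : 0 < L) (hf : ContinuousOn f (Icc 0 L))
    (hg : ContinuousOn g (Icc 0 L)) (hD : ContinuousOn D (Icc 0 L))
    (hDint : ∀ x ∈ Icc 0 L, D x = ∫ y in (0 : ℝ)..x, g y) :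
    |∫ x in (0 : ℝ)..L, f x * D x| ≤ L / 2 * ∫ x in (0 : ℝ)..L, (f x ^ 2 + g x ^ 2) := by
  have hu := uIcc_of_le hL.le
  have if2 : IntervalIntegrable (fun x => f x ^ 2) volume 0 L :=
    ContinuousOn.intervalIntegrable (by rw [hu]; fun_prop)
  have ig2 : IntervalIntegrable (fun x => g x ^ 2) volume 0 L :=
    ContinuousOn.intervalIntegrable (by rw [hu]; fun_prop)
  set J := ∫ x in (0 : ℝ)..L, g x ^ 2 with hJ
  have hJ0 : 0 ≤ J := intervalIntegral.integral_nonneg hL.le fun x _ => sq_nonneg _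
  have hD2 : ∀ x ∈ Icc 0 L, D x ^ 2 ≤ L * J := fun x hx => by
    rw [hDint x hx]
    have h1 := sq_integral_le hx.1 (hg.mono (Icc_subset_Icc_right hx.2))
    have h2 : ∫ y in (0 : ℝ)..x, g y ^ 2 ≤ J :=
      intervalIntegral.integral_mono_interval le_rfl hx.1 hx.2
        (Eventually.of_forall fun y => sq_nonneg (g y)) ig2
    calc _ ≤ x * ∫ y in (0 : ℝ)..x, g y ^ 2 := h1
      _ ≤ x * J := mul_le_mul_of_nonneg_left h2 hx.1
      _ ≤ L * J := mul_le_mul_of_nonneg_right hx.2 hJ0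
  refine (abs_integral_le (g := fun x => L / 2 * f x ^ 2 + J / 2) hL (hf.mul hD)
    (by fun_prop) ?_).trans (le_of_eq ?_)
  · intro x hx
    have h1 := hD2 x hx
    have h2 : 0 ≤ L / 2 * f x ^ 2 + J / 2 := by positivity
    refine abs_le_of_sq_le_sq ?_ h2
    change (f x * D x) ^ 2 ≤ _
    nlinarith [sq_nonneg (L * f x ^ 2 - J), mul_le_mul_of_nonneg_left h1 (sq_nonneg (f x))]
  · rw [intervalIntegral.integral_add (if2.const_mul _) intervalIntegrable_const,
      intervalIntegral.integral_add if2 ig2, intervalIntegral.integral_const_mul,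
      intervalIntegral.integral_const, ← hJ]
    simp only [smul_eq_mul, sub_zero]; ring

/-- Exponential stability in the `s`, `d` variables. -/
lemma exponential_decay (hL : 0 < L) (hM : 0 < M) (hML : M * L < 1 / 2) (hr : 0 < r) :
    ∃ C ≥ (1 : ℝ), ∃ μ > (0 : ℝ), ∀ s d st sx dt dx : ℝ → ℝ → ℝ,
      SumDiffSolution L M r s d st sx dt dx → ∀ t ∈ Ici (0 : ℝ),
        ∫ x in (0 : ℝ)..L, (s t x ^ 2 + d t x ^ 2) ≤
          C * Real.exp (-μ * t) * ∫ x in (0 : ℝ)..L, (s 0 x ^ 2 + d 0 x ^ 2) := by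
  have hML0 : 0 < M * L := mul_pos hM hL
  have hκ : 0 < Real.cos (M * L) + r * Real.sin (M * L) := by
    have hπ := Real.pi_gt_three
    have h1 := Real.cos_pos_of_mem_Ioo (x := M * L) ⟨by linarith, by linarith⟩
    have h2 := Real.sin_pos_of_pos_of_lt_pi hML0 (by linarith)
    positivity
  obtain ⟨C, hC, μ, hμ, key⟩ := lyapunov_decay hL hM hML hr hκ
  refine ⟨C, hC, μ, hμ, ?_⟩
  intro s d st sx dt dx h
  obtain ⟨D, hD, hDint, hDt, hDx⟩ := h.exists_primitive hL
  have b1 := h.energy_balance hL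
  have b2 := h.cross_balance hL hD hDint hDt hDx
  have b3 := h.mean_balance hL
  have b4 := h.multiplier_balance hL
  have b5 := h.adjoint_balance hL
  refine key _ _ _ _ _ (fun t => d t 0) (fun t => ∫ x in (0 : ℝ)..L, (d t x ^ 2 - s t x ^ 2))
    b1.1 b2.1 b3.1 b4.1 b5.1 b1.2 b2.2 b3.2 b4.2 b5.2 ?_ ?_ ?_ ?_ ?_
  · exact fun t _ => intervalIntegral.integral_nonneg hL.le fun x _ => by positivity
  all_goals
    intro t ht
    have cs := continuousOn_slice ht h.s_cont
    have cd := continuousOn_slice ht h.d_cont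
  · exact cross_bound hL cs cd (continuousOn_slice ht hD) (hDint t ht)
  · exact sq_integral_le_energy hL cs (by fun_prop) fun x _ => by linarith [sq_nonneg (d t x)]
  · rw [← intervalIntegral.integral_const_mul]
    refine abs_integral_le hL (by fun_prop) (by fun_prop) fun x hx => ?_
    rw [abs_mul, abs_of_nonneg (sub_nonneg.2 hx.2)]
    have h1 : |s t x * d t x| ≤ 1 / 2 * (s t x ^ 2 + d t x ^ 2) := by
      rw [abs_le]
      constructor <;> nlinarith [sq_nonneg (s t x + d t x), sq_nonneg (s t x - d t x)]
    calc (L - x) * |s t x * d t x| ≤ L * (1 / 2 * (s t x ^ 2 + d t x ^ 2)) :=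
          mul_le_mul (by linarith [hx.1]) h1 (abs_nonneg _) hL.le
      _ = _ := by ring
  · refine sq_integral_le_energy hL (by fun_prop) (by fun_prop) fun x _ => ?_
    have h1 := Real.sin_sq_add_cos_sq (M * (L - x))
    set a := Real.cos (M * (L - x))
    set b := Real.sin (M * (L - x))
    have h2 : (b ^ 2 + a ^ 2) * (s t x ^ 2 + d t x ^ 2) = s t x ^ 2 + d t x ^ 2 := by
      rw [h1, one_mul]
    nlinarith [sq_nonneg (b * s t x + a * d t x)]

end SumDiffSolution

/-- If `ML < 1/2` and `|k| < 1`, the closed-loop Bastin–Coron system with feedback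
gain `k` is exponentially stable in `L²`, with constants depending only on `L, M, k`. -/
theorem bastin_coron_exponential_stability_small_ML
    (L M k : ℝ) (hL : 0 < L) (hM : 0 < M)
    (hML : M * L < 1 / 2) (hk : |k| < 1) :
    ∃ C ≥ (1 : ℝ), ∃ μ > (0 : ℝ),
      ∀ δp δm dtp dxp dtm dxm : ℝ → ℝ → ℝ,
        IsBastinCoronSolution L M δp δm dtp dxp dtm dxm →
        (∀ t ∈ Set.Ici (0 : ℝ), δp t 0 = k * δm t 0 ∧ δm t L = δp t L) →
        ∀ t ∈ Set.Ici (0 : ℝ),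
          (∫ x in (0 : ℝ)..L, ((δp t x) ^ 2 + (δm t x) ^ 2)) ≤
            C * Real.exp (-μ * t) * ∫ x in (0 : ℝ)..L, ((δp 0 x) ^ 2 + (δm 0 x) ^ 2) := by
  obtain ⟨hk1, hk2⟩ := abs_lt.1 hk
  have h1k : 0 < 1 - k := by linarith
  have hr : 0 < (1 + k) / (1 - k) := div_pos (by linarith) h1k
  obtain ⟨C, hC, μ, hμ, key⟩ := SumDiffSolution.exponential_decay hL hM hML hr
  refine ⟨C, hC, μ, hμ, ?_⟩
  rintro δp δm dtp dxp dtm dxm ⟨hder, hcont, heq⟩ hbd t ht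
  have c1 : ContinuousOn (fun p : ℝ × ℝ => dtp p.1 p.2) (Ici 0 ×ˢ Icc 0 L) := hcont.fst
  have c2 : ContinuousOn (fun p : ℝ × ℝ => dxp p.1 p.2) (Ici 0 ×ˢ Icc 0 L) := hcont.snd.fst
  have c3 : ContinuousOn (fun p : ℝ × ℝ => dtm p.1 p.2) (Ici 0 ×ˢ Icc 0 L) := hcont.snd.snd.fst
  have c4 : ContinuousOn (fun p : ℝ × ℝ => dxm p.1 p.2) (Ici 0 ×ˢ Icc 0 L) := hcont.snd.snd.snd
  have hsol : SumDiffSolution L M ((1 + k) / (1 - k))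
      (fun t x => δp t x + δm t x) (fun t x => δp t x - δm t x)
      (fun t x => dtp t x + dtm t x) (fun t x => dxp t x + dxm t x)
      (fun t x => dtp t x - dtm t x) (fun t x => dxp t x - dxm t x) :=
    { st_deriv := fun t ht x hx => (hder t ht x hx).1.add (hder t ht x hx).2.2.1
      sx_deriv := fun t ht x hx => (hder t ht x hx).2.1.add (hder t ht x hx).2.2.2
      dt_deriv := fun t ht x hx => (hder t ht x hx).1.sub (hder t ht x hx).2.2.1
      dx_deriv := fun t ht x hx => (hder t ht x hx).2.1.sub (hder t ht x hx).2.2.2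
      st_cont := c1.add c3
      sx_cont := c2.add c4
      dt_cont := c1.sub c3
      dx_cont := c2.sub c4
      s_eq := fun t ht x hx => by linarith [(heq t ht x hx).1, (heq t ht x hx).2]
      d_eq := fun t ht x hx => by linarith [(heq t ht x hx).1, (heq t ht x hx).2]
      bdry_L := fun t ht => by rw [(hbd t ht).2, sub_self]
      bdry_0 := fun t ht => by
        rw [(hbd t ht).1]
        field_simp
        ring }
  have hdecay := key _ _ _ _ _ _ hsol t ht
  have hnorm : ∀ τ, ∫ x in (0 : ℝ)..L, ((δp τ x + δm τ x) ^ 2 + (δp τ x - δm τ x) ^ 2)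
      = 2 * ∫ x in (0 : ℝ)..L, ((δp τ x) ^ 2 + (δm τ x) ^ 2) := fun τ => by
    rw [← intervalIntegral.integral_const_mul]
    congr 1
    funext x
    ring
  rw [hnorm, hnorm] at hdecay
  linarith
end

section
/- Let L > 0, M > 0 and k ∈ ℝ satisfy M·L < 1/2 and k² ≥ (1 + 2ML)/(1 − 2ML). Then for every classical solution δ₊, δ₋ of the closed-loop Bastin–Coron system with feedback gain k, the Lyapunov function with affine linear weights E(t) = (1/2)·∫₀ᴸ [(1 + 2M(x−L))·δ₊(t,x)² + (1 − 2M(x−L))·δ₋(t,x)²] dx is nondecreasing in t, i.e. E(s) ≤ E(t) whenever 0 ≤ s ≤ t; in particular the closed-loop system is not exponentially stable for nonzero initial states. -/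
/-!
Write `w₊ = 1 + 2M(x-L)`, `w₋ = 1 - 2M(x-L)` and `g = w₊ δ₊² + w₋ δ₋²`, so that `E = ½ ∫ g dx`.
Since `w₊' = 2M`, `w₋' = -2M` and `w₊ + w₋ = 2`, the equations give the pointwise identity
`∂ₜ g = ∂ₓ(-w₊ δ₊² + w₋ δ₋²) + 2M (δ₊ - δ₋)²`.
Integrating over `[0, L]`, the boundary term at `L` vanishes and the one at `0` is
`((1 - 2ML) k² - (1 + 2ML)) δ₋(t,0)² ≥ 0`, so `∫ ∂ₜ g dx ≥ 0` (`integral_energyRate_nonneg`).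
Exchanging the order of integration in `∫₀ᴸ ∫ₛᵗ ∂ₜ g dτ dx = ∫₀ᴸ (g(t,x) - g(s,x)) dx` shows that
`E` is nondecreasing. Exponential decay would force `1 ≤ C e^{-μt}` for all `t ≥ 0` as soon as
`E(0) > 0`, which fails as `t → ∞`.

The joint continuity of `δ₊` and `δ₋` comes directly from the equations: as `M ≠ 0`, each of them
is a linear combination of the continuous derivative fields.
-/


open MeasureTheory

/-- The density `w₊ δ₊² + w₋ δ₋²` of (twice) the Lyapunov function. -/
noncomputable def energyDensity (L M : ℝ) (δp δm : ℝ → ℝ → ℝ) (t x : ℝ) : ℝ :=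
  (1 + 2 * M * (x - L)) * (δp t x) ^ 2 + (1 - 2 * M * (x - L)) * (δm t x) ^ 2

/-- The time derivative of `energyDensity`, expressed through the derivative fields. -/
noncomputable def energyRate (L M : ℝ) (δp δm dtp dtm : ℝ → ℝ → ℝ) (t x : ℝ) : ℝ :=
  (1 + 2 * M * (x - L)) * (2 * δp t x * dtp t x) + (1 - 2 * M * (x - L)) * (2 * δm t x * dtm t x)

section
variable {L M k : ℝ} {δp δm dtp dxp dtm dxm : ℝ → ℝ → ℝ}

lemma continuousOn_energyRate (hM : 0 < M)
    (hsol : IsBastinCoronSolution L M δp δm dtp dxp dtm dxm) :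
    ContinuousOn (fun p : ℝ × ℝ => energyRate L M δp δm dtp dtm p.1 p.2)
      (Set.Ici 0 ×ˢ Set.Icc 0 L) := by
  obtain ⟨-, hc, he⟩ := hsol
  have h1 := hc.fst
  have h2 := hc.snd.fst
  have h3 := hc.snd.snd.fst
  have h4 := hc.snd.snd.snd
  dsimp only at h1 h2 h3 h4
  have hm : ContinuousOn (fun p : ℝ × ℝ => δm p.1 p.2) (Set.Ici 0 ×ˢ Set.Icc 0 L) := by
    refine ((h1.add h2).div_const (-M)).congr fun p hp => ?_
    have := (he p.1 hp.1 p.2 hp.2).1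
    simp only [Pi.add_apply]
    field_simp
    linarith
  have hp : ContinuousOn (fun p : ℝ × ℝ => δp p.1 p.2) (Set.Ici 0 ×ˢ Set.Icc 0 L) := by
    refine ((h3.sub h4).div_const (-M)).congr fun p hp => ?_
    have := (he p.1 hp.1 p.2 hp.2).2
    simp only [Pi.sub_apply]
    field_simp
    linarith
  unfold energyRate
  fun_prop

lemma hasDerivAt_energyDensity (hsol : IsBastinCoronSolution L M δp δm dtp dxp dtm dxm)
    {t x : ℝ} (ht : 0 ≤ t) (hx : x ∈ Set.Icc 0 L) :
    HasDerivAt (fun s => energyDensity L M δp δm s x) (energyRate L M δp δm dtp dtm t x) t := by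
  obtain ⟨h1, -, h3, -⟩ := hsol.1 t ht x hx
  refine (((h1.pow 2).const_mul (1 + 2 * M * (x - L))).add
    ((h3.pow 2).const_mul (1 - 2 * M * (x - L)))).congr_deriv ?_
  simp [energyRate]

lemma continuousOn_energyDensity (hsol : IsBastinCoronSolution L M δp δm dtp dxp dtm dxm)
    {t : ℝ} (ht : 0 ≤ t) : ContinuousOn (energyDensity L M δp δm t) (Set.Icc 0 L) := by
  have hp : ContinuousOn (δp t) (Set.Icc 0 L) := fun x hx =>
    (hsol.1 t ht x hx).2.1.continuousAt.continuousWithinAt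
  have hm : ContinuousOn (δm t) (Set.Icc 0 L) := fun x hx =>
    (hsol.1 t ht x hx).2.2.2.continuousAt.continuousWithinAt
  unfold energyDensity
  fun_prop

lemma integral_energyRate_nonneg (hL : 0 < L) (hM : 0 < M) (hML : M * L < 1 / 2)
    (hk : k ^ 2 ≥ (1 + 2 * M * L) / (1 - 2 * M * L))
    (hsol : IsBastinCoronSolution L M δp δm dtp dxp dtm dxm)
    (hbc : ∀ t ∈ Set.Ici (0 : ℝ), δp t 0 = k * δm t 0 ∧ δm t L = δp t L)
    {t : ℝ} (ht : 0 ≤ t) :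
    0 ≤ ∫ x in (0 : ℝ)..L, energyRate L M δp δm dtp dtm t x := by
  -- the flux whose `x`-derivative is `∂ₜ g - 2M (δ₊ - δ₋)²`
  let F : ℝ → ℝ := fun x =>
    -((1 + 2 * M * (x - L)) * (δp t x) ^ 2) + (1 - 2 * M * (x - L)) * (δm t x) ^ 2
  have hF : ∀ x ∈ Set.Icc 0 L, HasDerivAt F
      (energyRate L M δp δm dtp dtm t x - 2 * M * (δp t x - δm t x) ^ 2) x := by
    intro x hx
    obtain ⟨-, h2, -, h4⟩ := hsol.1 t ht x hx
    obtain ⟨e1, e2⟩ := hsol.2.2 t ht x hx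
    have hw := ((hasDerivAt_id x).sub_const L).const_mul (2 * M)
    refine ((((hw.const_add 1).mul (h2.pow 2)).neg).add
      ((hw.const_sub 1).mul (h4.pow 2))).congr_deriv ?_
    have e1' : dtp t x = -dxp t x - M * δm t x := by linarith
    have e2' : dtm t x = dxm t x - M * δp t x := by linarith
    simp [energyRate, e1', e2']
    ring
  have hrate : ContinuousOn (energyRate L M δp δm dtp dtm t) (Set.Icc 0 L) :=
    (continuousOn_energyRate hM hsol).comp (f := fun x => (t, x)) (by fun_prop)
      fun x hx => ⟨ht, hx⟩
  have hFL : F L - F 0 ≤ ∫ x in (0 : ℝ)..L, energyRate L M δp δm dtp dtm t x := by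
    refine intervalIntegral.sub_le_integral_of_hasDeriv_right_of_le hL.le
      (fun x hx => (hF x hx).continuousAt.continuousWithinAt)
      (fun x hx => (hF x (Set.Ioo_subset_Icc_self hx)).hasDerivWithinAt)
      hrate.integrableOn_Icc fun x _ => ?_
    have : 0 ≤ 2 * M * (δp t x - δm t x) ^ 2 := by positivity
    linarith
  refine le_trans ?_ hFL
  obtain ⟨b0, bL⟩ := hbc t ht
  have hk' : 1 + 2 * M * L ≤ k ^ 2 * (1 - 2 * M * L) :=
    (div_le_iff₀ (by linarith)).1 hk
  have : F L - F 0 = (k ^ 2 * (1 - 2 * M * L) - (1 + 2 * M * L)) * (δm t 0) ^ 2 := by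
    simp only [F, b0, bL]
    ring
  rw [this]
  exact mul_nonneg (by linarith) (sq_nonneg _)

lemma integral_energyDensity_mono (hL : 0 < L) (hM : 0 < M) (hML : M * L < 1 / 2)
    (hk : k ^ 2 ≥ (1 + 2 * M * L) / (1 - 2 * M * L))
    (hsol : IsBastinCoronSolution L M δp δm dtp dxp dtm dxm)
    (hbc : ∀ t ∈ Set.Ici (0 : ℝ), δp t 0 = k * δm t 0 ∧ δm t L = δp t L)
    {s t : ℝ} (hs : 0 ≤ s) (hst : s ≤ t) :
    ∫ x in (0 : ℝ)..L, energyDensity L M δp δm s x ≤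
      ∫ x in (0 : ℝ)..L, energyDensity L M δp δm t x := by
  have hcont := continuousOn_energyRate hM hsol
  have hint : ∀ r, 0 ≤ r → IntervalIntegrable (energyDensity L M δp δm r) volume 0 L :=
    fun r hr => (continuousOn_energyDensity hsol hr).intervalIntegrable_of_Icc hL.le
  have hftc : ∀ x ∈ Set.Icc 0 L, ∫ τ in s..t, energyRate L M δp δm dtp dtm τ x =
      energyDensity L M δp δm t x - energyDensity L M δp δm s x := by
    intro x hx
    refine intervalIntegral.integral_eq_sub_of_hasDerivAt
      (f := fun τ => energyDensity L M δp δm τ x) (fun τ hτ => ?_) ?_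
    · rw [Set.uIcc_of_le hst] at hτ
      exact hasDerivAt_energyDensity hsol (hs.trans hτ.1) hx
    · refine ContinuousOn.intervalIntegrable_of_Icc hst ?_
      exact hcont.comp (f := fun τ => (τ, x)) (by fun_prop) fun τ hτ => ⟨hs.trans hτ.1, hx⟩
  have hswap : ∫ x in (0 : ℝ)..L, ∫ τ in s..t, energyRate L M δp δm dtp dtm τ x =
      ∫ τ in s..t, ∫ x in (0 : ℝ)..L, energyRate L M δp δm dtp dtm τ x := by
    refine intervalIntegral_intervalIntegral_swap
      (F := fun x τ => energyRate L M δp δm dtp dtm τ x) ?_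
    have hc : ContinuousOn (fun p : ℝ × ℝ => energyRate L M δp δm dtp dtm p.2 p.1)
        (Set.Icc 0 L ×ˢ Set.Icc s t) :=
      hcont.comp (f := Prod.swap) continuous_swap.continuousOn
        fun p hp => ⟨hs.trans hp.2.1, hp.1⟩
    rw [Set.uIoc_of_le hL.le, Set.uIoc_of_le hst]
    exact (hc.integrableOn_compact (isCompact_Icc.prod isCompact_Icc)).mono_set
      (Set.prod_mono Set.Ioc_subset_Icc_self Set.Ioc_subset_Icc_self)
  have hdiff : ∫ x in (0 : ℝ)..L, ∫ τ in s..t, energyRate L M δp δm dtp dtm τ x =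
      (∫ x in (0 : ℝ)..L, energyDensity L M δp δm t x) -
        ∫ x in (0 : ℝ)..L, energyDensity L M δp δm s x := by
    rw [← intervalIntegral.integral_sub (hint t (hs.trans hst)) (hint s hs)]
    refine intervalIntegral.integral_congr fun x hx => hftc x ?_
    rwa [Set.uIcc_of_le hL.le] at hx
  have hnn : 0 ≤ ∫ τ in s..t, ∫ x in (0 : ℝ)..L, energyRate L M δp δm dtp dtm τ x :=
    intervalIntegral.integral_nonneg hst fun τ hτ =>
      integral_energyRate_nonneg hL hM hML hk hsol hbc (hs.trans hτ.1)
  linarith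
end

/-- If `ML < 1/2` and `k² ≥ (1 + 2ML)/(1 − 2ML)`, the Lyapunov function with affine
linear weights is nondecreasing along every classical solution of the closed-loop
Bastin–Coron system; in particular the system is not exponentially stable for nonzero
initial states. -/
theorem bastin_coron_instability_affine_weights
    (L M k : ℝ) (hL : 0 < L) (hM : 0 < M)
    (hML : M * L < 1 / 2)
    (hk : k ^ 2 ≥ (1 + 2 * M * L) / (1 - 2 * M * L))
    (δp δm dtp dxp dtm dxm : ℝ → ℝ → ℝ)
    (hsol : IsBastinCoronSolution L M δp δm dtp dxp dtm dxm)
    (hbc : ∀ t ∈ Set.Ici (0 : ℝ), δp t 0 = k * δm t 0 ∧ δm t L = δp t L) :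
    (∀ s t : ℝ, 0 ≤ s → s ≤ t →
      (1 / 2) * (∫ x in (0 : ℝ)..L,
          ((1 + 2 * M * (x - L)) * (δp s x) ^ 2 + (1 - 2 * M * (x - L)) * (δm s x) ^ 2)) ≤
      (1 / 2) * (∫ x in (0 : ℝ)..L,
          ((1 + 2 * M * (x - L)) * (δp t x) ^ 2 + (1 - 2 * M * (x - L)) * (δm t x) ^ 2))) ∧
    (0 < (1 / 2) * (∫ x in (0 : ℝ)..L,
          ((1 + 2 * M * (x - L)) * (δp 0 x) ^ 2 + (1 - 2 * M * (x - L)) * (δm 0 x) ^ 2)) →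
      ∀ μ > (0 : ℝ), ∀ C : ℝ,
        ¬ (∀ t ≥ (0 : ℝ),
          (1 / 2) * (∫ x in (0 : ℝ)..L,
              ((1 + 2 * M * (x - L)) * (δp t x) ^ 2 + (1 - 2 * M * (x - L)) * (δm t x) ^ 2)) ≤
            C * Real.exp (-μ * t) *
              ((1 / 2) * ∫ x in (0 : ℝ)..L,
                ((1 + 2 * M * (x - L)) * (δp 0 x) ^ 2 + (1 - 2 * M * (x - L)) * (δm 0 x) ^ 2)))) := by
  have hmono := fun s t => integral_energyDensity_mono (s := s) (t := t) hL hM hML hk hsol hbc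
  simp only [energyDensity] at hmono
  refine ⟨fun s t hs hst => by linarith [hmono s t hs hst], fun hpos μ hμ C h => ?_⟩
  have hlim : Filter.Tendsto (fun t : ℝ => C * Real.exp (-μ * t)) Filter.atTop (nhds 0) := by
    have : Filter.Tendsto (fun t : ℝ => -μ * t) Filter.atTop Filter.atBot :=
      Filter.tendsto_id.const_mul_atTop_of_neg (by linarith)
    simpa using (Real.tendsto_exp_atBot.comp this).const_mul C
  obtain ⟨t, ht1, ht0⟩ :=
    ((hlim.eventually (gt_mem_nhds one_pos)).and (Filter.eventually_ge_atTop 0)).exists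
  have h1 := h t ht0
  have h2 := hmono 0 t le_rfl ht0
  have h3 := mul_lt_mul_of_pos_right ht1 hpos
  linarith
end

section
/- Let L, T > 0, 0 < c ≤ d, ε₀ > 0, M > 0, ψ > 0, υ ∈ (tanh²(ψL), 1] and k₀, k_L ∈ ℝ. Assume: (i) 3M + ε₀ ≤ (cψ/2)·(1/√υ − √υ); (ii) k₀² ≤ (c/d)·h₊(L/2)/h₋(L/2) and k_L² ≤ (c/d)·h₊(L/2)/h₋(L/2). Let δ₊, δ₋ : [0,T] × [0,L] → ℝ be continuously differentiable, let Λ₊, Λ₋ : [0,T] × [0,L] → ℝ be continuously differentiable with c ≤ Λ₊ ≤ d, −d ≤ Λ₋ ≤ −c and |∂ₓΛ₊| ≤ ε₀, |∂ₓΛ₋| ≤ ε₀, and let G₊, G₋ : ℝ² → ℝ satisfy |G₊(u,v)| ≤ M·(|u|+|v|) and |G₋(u,v)| ≤ M·(|u|+|v|) for all (u,v). Suppose that pointwise ∂ₜδ₊ + Λ₊·∂ₓδ₊ = G₊(δ₊,δ₋) and ∂ₜδ₋ + Λ₋·∂ₓδ₋ = G₋(δ₊,δ₋), with boundary conditions δ₊(t,0)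 = k₀·δ₋(t,0) and δ₋(t,L) = k_L·δ₊(t,L). Then the Lyapunov function E(t) = (1/2)·∫₀ᴸ [h₊(x − L/2)·δ₊(t,x)² + h₋(x − L/2)·δ₋(t,x)²] dx satisfies E(t) ≤ exp(−c·ψ·√υ·t)·E(0) for all t ∈ [0,T]. -/
/-!
The proof is the classical weighted energy estimate. Write `s = √υ` and `y = x - L/2`.
The weights are positive on `[-L, L]` (`hplus_pos` and the reflection `h₋(y) = h₊(-y)`), satisfy
`h₊' = -ψ (s h₊ + (1 - s²) cosh)`, `h₋' = ψ (s h₋ + (1 - s²) cosh)` and `h₊ + h₋ = 2 s cosh`.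
Put `W = h₊ δ₊² + h₋ δ₋²` and let `Φ = h₊ Λ₊ δ₊² + h₋ Λ₋ δ₋²` be its flux. The derivatives
of the weights produce the damping `-cψs W`, and the surplus `cψ(1 - s²) cosh · (δ₊² + δ₋²)`
absorbs the source terms and the `x`-derivatives of the speeds thanks to the smallness
hypothesis; this gives `cψs W + ∂ₜW ≤ -∂ₓΦ` pointwise (`pointwise_dissipation`). The feedback
gains make `Φ` nonnegative at `x = L` and nonpositive at `x = 0` (`boundary_flux_nonneg`),
hence `∫ (cψs W + ∂ₜW) dx ≤ 0`.

To conclude, `exp(cψs t) ∫ W dx` is shown to be at most its value at time zero by the fundamental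
theorem of calculus in `t` and Fubini (`integral_le_integral_of_deriv_nonpos`), which avoids
differentiating under the integral sign.
-/

open MeasureTheory

/-- The hyperbolic weight `h₊(x) = √υ·cosh(ψx) − sinh(ψx)`. -/
noncomputable def hplus (ψ υ x : ℝ) : ℝ :=
  Real.sqrt υ * Real.cosh (ψ * x) - Real.sinh (ψ * x)

/-- The hyperbolic weight `h₋(x) = √υ·cosh(ψx) + sinh(ψx)`. -/
noncomputable def hminus (ψ υ x : ℝ) : ℝ :=
  Real.sqrt υ * Real.cosh (ψ * x) + Real.sinh (ψ * x)

lemma hminus_eq_hplus_neg (ψ υ x : ℝ) : hminus ψ υ x = hplus ψ υ (-x) := by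
  simp [hplus, hminus]

lemma hplus_pos {L ψ υ : ℝ} (hψ : 0 < ψ)
    (hυ : Real.tanh (ψ * L) ^ 2 < υ) {y : ℝ} (hy2 : y ≤ L) :
    0 < hplus ψ υ y := by
  have hCL := Real.cosh_pos (ψ * L)
  have hCy := Real.cosh_pos (ψ * y)
  have h1 : Real.tanh (ψ * L) < Real.sqrt υ := Real.lt_sqrt_of_sq_lt hυ
  rw [Real.tanh_eq_sinh_div_cosh, div_lt_iff₀ hCL] at h1
  -- `sinh (ψL - ψy) ≥ 0` is the monotonicity of `tanh` with denominators cleared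
  have h2 : 0 ≤ Real.sinh (ψ * L - ψ * y) :=
    Real.sinh_nonneg_iff.2 (by nlinarith)
  rw [Real.sinh_sub] at h2
  have h3 : 0 < hplus ψ υ y * Real.cosh (ψ * L) := by
    unfold hplus
    nlinarith [mul_lt_mul_of_pos_right h1 hCy]
  exact pos_of_mul_pos_left h3 hCL.le

lemma hasDerivAt_hplus (ψ υ L x : ℝ) :
    HasDerivAt (fun x => hplus ψ υ (x - L / 2))
      (-(ψ * (Real.sqrt υ * hplus ψ υ (x - L / 2)
        + (1 - Real.sqrt υ ^ 2) * Real.cosh (ψ * (x - L / 2))))) x := by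
  have h0 : HasDerivAt (fun x : ℝ => ψ * (x - L / 2)) ψ x := by
    simpa using ((hasDerivAt_id x).sub_const (L / 2)).const_mul ψ
  have h := (h0.cosh.const_mul (Real.sqrt υ)).sub h0.sinh
  refine h.congr_deriv ?_
  unfold hplus
  ring

lemma hasDerivAt_hminus (ψ υ L x : ℝ) :
    HasDerivAt (fun x => hminus ψ υ (x - L / 2))
      (ψ * (Real.sqrt υ * hminus ψ υ (x - L / 2)
        + (1 - Real.sqrt υ ^ 2) * Real.cosh (ψ * (x - L / 2)))) x := by
  have h0 : HasDerivAt (fun x : ℝ => ψ * (x - L / 2)) ψ x := by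
    simpa using ((hasDerivAt_id x).sub_const (L / 2)).const_mul ψ
  have h := (h0.cosh.const_mul (Real.sqrt υ)).add h0.sinh
  refine h.congr_deriv ?_
  unfold hminus
  ring

/-- A function on a rectangle which is continuous in `x` and has a continuous partial derivative in
`t` is jointly continuous: the bound on the derivative makes it Lipschitz in `t` uniformly
in `x`. -/
lemma continuousOn_uncurry_of_deriv {T L : ℝ} {f ft : ℝ → ℝ → ℝ}
    (hf : ∀ t ∈ Set.Icc 0 T, ContinuousOn (f t) (Set.Icc 0 L))
    (hft : ∀ t ∈ Set.Icc 0 T, ∀ x ∈ Set.Icc 0 L, HasDerivAt (fun s => f s x) (ft t x) t)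
    (hc : ContinuousOn (fun p : ℝ × ℝ => ft p.1 p.2) (Set.Icc 0 T ×ˢ Set.Icc 0 L)) :
    ContinuousOn (fun p : ℝ × ℝ => f p.1 p.2) (Set.Icc 0 T ×ˢ Set.Icc 0 L) := by
  obtain ⟨C, hC⟩ := (isCompact_Icc.prod isCompact_Icc).exists_bound_of_continuousOn hc
  refine continuousOn_prod_of_continuousOn_lipschitzOnWith _ C.toNNReal (fun t ht => hf t ht) ?_
  intro x hx
  refine Convex.lipschitzOnWith_of_nnnorm_hasDerivWithin_le (convex_Icc 0 T)
    (fun t ht => (hft t ht x hx).hasDerivWithinAt) (fun t ht => ?_)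
  exact NNReal.coe_le_coe.1 ((hC (t, x) ⟨ht, hx⟩).trans (Real.le_coe_toNNReal C))

/-- If the spatial integral of `∂ₜ f` is nonpositive at every time, then `∫ f dx` never exceeds its
initial value. -/
lemma integral_le_integral_of_deriv_nonpos {T L : ℝ} (hL : 0 ≤ L) {f ft : ℝ → ℝ → ℝ}
    (hf : ∀ t ∈ Set.Icc 0 T, ContinuousOn (f t) (Set.Icc 0 L))
    (hft : ∀ t ∈ Set.Icc 0 T, ∀ x ∈ Set.Icc 0 L, HasDerivAt (fun s => f s x) (ft t x) t)
    (hc : ContinuousOn (fun p : ℝ × ℝ => ft p.1 p.2) (Set.Icc 0 T ×ˢ Set.Icc 0 L))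
    (hneg : ∀ t ∈ Set.Icc 0 T, ∫ x in (0 : ℝ)..L, ft t x ≤ 0) {t : ℝ} (ht : t ∈ Set.Icc 0 T) :
    ∫ x in (0 : ℝ)..L, f t x ≤ ∫ x in (0 : ℝ)..L, f 0 x := by
  have h0 : (0 : ℝ) ∈ Set.Icc 0 T := ⟨le_rfl, ht.1.trans ht.2⟩
  have hsub : Set.Icc 0 t ⊆ Set.Icc 0 T := Set.Icc_subset_Icc le_rfl ht.2
  have hii : ∀ t ∈ Set.Icc 0 T, IntervalIntegrable (f t) volume 0 L := fun t ht =>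
    (hf t ht).intervalIntegrable_of_Icc hL
  have hftc : ∀ x ∈ Set.Icc 0 L, ∫ s in (0 : ℝ)..t, ft s x = f t x - f 0 x := by
    intro x hx
    apply intervalIntegral.integral_eq_sub_of_hasDerivAt (f := fun s => f s x)
    · intro s hs
      rw [Set.uIcc_of_le ht.1] at hs
      exact hft s (hsub hs) x hx
    · refine ContinuousOn.intervalIntegrable_of_Icc ht.1 ?_
      exact hc.comp (f := fun s : ℝ => (s, x)) (by fun_prop) (fun s hs => ⟨hsub hs, hx⟩)
  have hint : Integrable (Function.uncurry ft)
      ((volume.restrict (Set.uIoc 0 t)).prod (volume.restrict (Set.Ioc 0 L))) := by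
    rw [Measure.prod_restrict, ← Measure.volume_eq_prod, Set.uIoc_of_le ht.1]
    have := (hc.mono (Set.prod_mono hsub subset_rfl)).integrableOn_compact
      (μ := volume) (isCompact_Icc.prod isCompact_Icc)
    exact this.mono_set (Set.prod_mono Set.Ioc_subset_Icc_self Set.Ioc_subset_Icc_self)
  have hswap := intervalIntegral_integral_swap hint
  simp only [← intervalIntegral.integral_of_le hL] at hswap
  rw [intervalIntegral.integral_congr (g := fun x => f t x - f 0 x)
    (fun x hx => hftc x (by rwa [Set.uIcc_of_le hL] at hx)),
    intervalIntegral.integral_sub (hii t ht) (hii 0 h0)] at hswap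
  have hle : ∫ s in (0 : ℝ)..t, ∫ x in (0 : ℝ)..L, ft s x ≤ 0 := by
    have := intervalIntegral.integral_nonneg (f := fun s => -∫ x in (0 : ℝ)..L, ft s x)
      (μ := volume) ht.1 (fun s hs => neg_nonneg.2 (hneg s (hsub hs)))
    rw [intervalIntegral.integral_neg] at this
    linarith
  linarith

/-- The algebra behind the interior estimate. Here `P`, `Q`, `C` are the values of `h₊`, `h₋`
and `cosh`, `a`, `b` those of `δ₊`, `δ₋`, `l`, `m` those of the speeds; the right-hand side is minus
the `x`-derivative of the flux `h₊ Λ₊ δ₊² + h₋ Λ₋ δ₋²`. -/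
lemma pointwise_dissipation {P Q C s c ψ M ε a b ta tb xa xb l m xl xm g g' : ℝ}
    (hP : 0 < P) (hQ : 0 < Q) (hPQ : P + Q = 2 * s * C) (hC : 0 < C) (hs : 0 < s) (hs1 : s ≤ 1)
    (hψ : 0 < ψ) (hM : 0 < M) (hε : 0 < ε)
    (hsmall : 2 * s * (3 * M + ε) ≤ c * ψ * (1 - s ^ 2))
    (hl : c ≤ l) (hm : m ≤ -c) (hxl : |xl| ≤ ε) (hxm : |xm| ≤ ε)
    (hg : |g| ≤ M * (|a| + |b|)) (hg' : |g'| ≤ M * (|a| + |b|))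
    (ha : ta + l * xa = g) (hb : tb + m * xb = g') :
    c * ψ * s * (P * a ^ 2 + Q * b ^ 2) + (P * (2 * a * ta) + Q * (2 * b * tb)) ≤
      -((-(ψ * (s * P + (1 - s ^ 2) * C)) * l + P * xl) * a ^ 2 + P * l * (2 * a * xa)
        + ((ψ * (s * Q + (1 - s ^ 2) * C) * m + Q * xm) * b ^ 2 + Q * m * (2 * b * xb))) := by
  have hs2 : 0 ≤ 1 - s ^ 2 := by nlinarith
  have key : ∀ u v : ℝ, |v| ≤ M * (|a| + |b|) → u * v ≤ |u| * (M * (|a| + |b|)) := fun u v hv =>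
    (le_abs_self _).trans ((abs_mul u v).le.trans (mul_le_mul_of_nonneg_left hv (abs_nonneg u)))
  have e1 := mul_le_mul_of_nonneg_left (key a g hg) hP.le
  have e2 := mul_le_mul_of_nonneg_left (key b g' hg') hQ.le
  have e3 : 0 ≤ (ψ * (s * P + (1 - s ^ 2) * C)) * a ^ 2 * (l - c) :=
    mul_nonneg (by positivity) (by linarith)
  have e4 : 0 ≤ (ψ * (s * Q + (1 - s ^ 2) * C)) * b ^ 2 * (-c - m) :=
    mul_nonneg (by positivity) (by linarith)
  have e5 : 0 ≤ P * a ^ 2 * (ε - xl) :=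
    mul_nonneg (by positivity) (by linarith [le_abs_self xl])
  have e6 : 0 ≤ Q * b ^ 2 * (ε - xm) :=
    mul_nonneg (by positivity) (by linarith [le_abs_self xm])
  have e7 := mul_le_mul_of_nonneg_right hsmall (by positivity : 0 ≤ C * (a ^ 2 + b ^ 2))
  -- both weights are at most `h₊ + h₋ = 2 s cosh`, and `2|a||b| ≤ a² + b²`
  have e8 : ε * (P * a ^ 2 + Q * b ^ 2)
      + 2 * (P * (|a| * (M * (|a| + |b|))) + Q * (|b| * (M * (|a| + |b|))))
      ≤ (P + Q) * (3 * M + ε) * (a ^ 2 + b ^ 2) := by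
    rw [← sq_abs a, ← sq_abs b]
    generalize |a| = A
    generalize |b| = B
    have f1 : 0 ≤ (2 * M + ε) * (P * B ^ 2 + Q * A ^ 2) := by positivity
    have f2 : 0 ≤ M * (P + Q) * (A - B) ^ 2 := by positivity
    nlinarith
  rw [hPQ] at e8
  obtain rfl : ta = g - l * xa := by linarith
  obtain rfl : tb = g' - m * xb := by linarith
  linarith

/-- The sign of the flux across a boundary point: `P` is the weight of the outgoing component `u`,
`Q` that of the component `k * u` reflected by the feedback, `l` and `m` the moduli of the
corresponding speeds. -/
lemma boundary_flux_nonneg {P Q c d k l m u : ℝ} (hP : 0 < P) (hQ : 0 < Q) (hd : 0 < d)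
    (hk : k ^ 2 ≤ c / d * (P / Q)) (hl : c ≤ l) (hm : m ≤ d) :
    0 ≤ P * l * u ^ 2 - Q * m * (k * u) ^ 2 := by
  rw [div_mul_div_comm, le_div_iff₀ (by positivity)] at hk
  have h1 : Q * m * k ^ 2 ≤ Q * d * k ^ 2 := by gcongr
  have h2 : c * P ≤ l * P := by gcongr
  have h3 : 0 ≤ (P * l - Q * m * k ^ 2) * u ^ 2 := mul_nonneg (by linarith) (sq_nonneg u)
  linarith

/-- Exponential decay of the Lyapunov function with hyperbolic weights for a 2×2
quasilinear hyperbolic system in diagonal form under smallness of the source term and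
of the boundary feedback gains. -/
theorem quasilinear_lyapunov_decay_hyperbolic_weights
    (L T c d ε₀ M ψ υ k₀ kL : ℝ)
    (hL : 0 < L) (hT : 0 < T) (hc : 0 < c) (hcd : c ≤ d) (hε₀ : 0 < ε₀) (hM : 0 < M)
    (hψ : 0 < ψ) (hυ : Real.tanh (ψ * L) ^ 2 < υ) (hυ1 : υ ≤ 1)
    (hsmall : 3 * M + ε₀ ≤ c * ψ / 2 * (1 / Real.sqrt υ - Real.sqrt υ))
    (hk₀ : k₀ ^ 2 ≤ c / d * (hplus ψ υ (L / 2) / hminus ψ υ (L / 2)))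
    (hkL : kL ^ 2 ≤ c / d * (hplus ψ υ (L / 2) / hminus ψ υ (L / 2)))
    (δp δm dtp dxp dtm dxm Λp Λm dxΛp dxΛm : ℝ → ℝ → ℝ)
    (Gp Gm : ℝ → ℝ → ℝ)
    -- δ₊, δ₋ are continuously differentiable with the given partial derivatives
    (hderiv : ∀ t ∈ Set.Icc (0 : ℝ) T, ∀ x ∈ Set.Icc (0 : ℝ) L,
      HasDerivAt (fun s => δp s x) (dtp t x) t ∧
      HasDerivAt (fun y => δp t y) (dxp t x) x ∧
      HasDerivAt (fun s => δm s x) (dtm t x) t ∧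
      HasDerivAt (fun y => δm t y) (dxm t x) x)
    (hcont : ContinuousOn
      (fun p : ℝ × ℝ => (dtp p.1 p.2, dxp p.1 p.2, dtm p.1 p.2, dxm p.1 p.2))
      (Set.Icc 0 T ×ˢ Set.Icc 0 L))
    -- Λ₊, Λ₋ are continuously differentiable in x with the given partial derivatives
    (hΛderiv : ∀ t ∈ Set.Icc (0 : ℝ) T, ∀ x ∈ Set.Icc (0 : ℝ) L,
      HasDerivAt (fun y => Λp t y) (dxΛp t x) x ∧
      HasDerivAt (fun y => Λm t y) (dxΛm t x) x)
    (hΛcont : ContinuousOn (fun p : ℝ × ℝ => (dxΛp p.1 p.2, dxΛm p.1 p.2))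
      (Set.Icc 0 T ×ˢ Set.Icc 0 L))
    -- bounds on the characteristic speeds and their x-derivatives
    (hΛbound : ∀ t ∈ Set.Icc (0 : ℝ) T, ∀ x ∈ Set.Icc (0 : ℝ) L,
      c ≤ Λp t x ∧ Λp t x ≤ d ∧ -d ≤ Λm t x ∧ Λm t x ≤ -c ∧
      |dxΛp t x| ≤ ε₀ ∧ |dxΛm t x| ≤ ε₀)
    -- bound on the source terms
    (hG : ∀ u v : ℝ, |Gp u v| ≤ M * (|u| + |v|) ∧ |Gm u v| ≤ M * (|u| + |v|))
    -- the quasilinear PDE in diagonal form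
    (hpde : ∀ t ∈ Set.Icc (0 : ℝ) T, ∀ x ∈ Set.Icc (0 : ℝ) L,
      dtp t x + Λp t x * dxp t x = Gp (δp t x) (δm t x) ∧
      dtm t x + Λm t x * dxm t x = Gm (δp t x) (δm t x))
    -- boundary feedback conditions
    (hbc : ∀ t ∈ Set.Icc (0 : ℝ) T, δp t 0 = k₀ * δm t 0 ∧ δm t L = kL * δp t L) :
    ∀ t ∈ Set.Icc (0 : ℝ) T,
      (1 / 2) * (∫ x in (0 : ℝ)..L,
          (hplus ψ υ (x - L / 2) * (δp t x) ^ 2 + hminus ψ υ (x - L / 2) * (δm t x) ^ 2)) ≤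
        Real.exp (-(c * ψ * Real.sqrt υ) * t) *
          ((1 / 2) * ∫ x in (0 : ℝ)..L,
            (hplus ψ υ (x - L / 2) * (δp 0 x) ^ 2 + hminus ψ υ (x - L / 2) * (δm 0 x) ^ 2)) := by
  intro t ht
  have hυ0 : 0 < υ := (sq_nonneg _).trans_lt hυ
  have hs : 0 < Real.sqrt υ := Real.sqrt_pos.2 hυ0
  have hs1 : Real.sqrt υ ≤ 1 := Real.sqrt_le_one.2 hυ1
  have hd : 0 < d := hc.trans_le hcd
  have hP : ∀ x ∈ Set.Icc 0 L, 0 < hplus ψ υ (x - L / 2) := fun x hx =>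
    hplus_pos hψ hυ (by linarith [hx.2])
  have hQ : ∀ x ∈ Set.Icc 0 L, 0 < hminus ψ υ (x - L / 2) := fun x hx => by
    rw [hminus_eq_hplus_neg]
    exact hplus_pos hψ hυ (by linarith [hx.1])
  have hsmall' : 2 * Real.sqrt υ * (3 * M + ε₀) ≤ c * ψ * (1 - Real.sqrt υ ^ 2) := by
    have h := mul_le_mul_of_nonneg_left hsmall (by positivity : 0 ≤ 2 * Real.sqrt υ)
    refine h.trans_eq ?_
    field_simp
  have hpc : Continuous fun x => hplus ψ υ (x - L / 2) := by unfold hplus; fun_prop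
  have hmc : Continuous fun x => hminus ψ υ (x - L / 2) := by unfold hminus; fun_prop
  have hδpx : ∀ t ∈ Set.Icc 0 T, ContinuousOn (δp t) (Set.Icc 0 L) := fun t ht x hx =>
    (hderiv t ht x hx).2.1.continuousAt.continuousWithinAt
  have hδmx : ∀ t ∈ Set.Icc 0 T, ContinuousOn (δm t) (Set.Icc 0 L) := fun t ht x hx =>
    (hderiv t ht x hx).2.2.2.continuousAt.continuousWithinAt
  have hδp := continuousOn_uncurry_of_deriv hδpx (fun t ht x hx => (hderiv t ht x hx).1) hcont.fst
  have hδm := continuousOn_uncurry_of_deriv hδmx (fun t ht x hx => (hderiv t ht x hx).2.2.1)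
    hcont.snd.snd.fst
  set k := c * ψ * Real.sqrt υ with hk
  let W : ℝ → ℝ → ℝ := fun t x =>
    hplus ψ υ (x - L / 2) * (δp t x) ^ 2 + hminus ψ υ (x - L / 2) * (δm t x) ^ 2
  let D : ℝ → ℝ → ℝ := fun t x => k * W t x +
    (hplus ψ υ (x - L / 2) * (2 * δp t x * dtp t x)
      + hminus ψ υ (x - L / 2) * (2 * δm t x * dtm t x))
  have hWx : ∀ t ∈ Set.Icc 0 T, ContinuousOn (W t) (Set.Icc 0 L) := fun t ht =>
    (hpc.continuousOn.mul ((hδpx t ht).pow 2)).add (hmc.continuousOn.mul ((hδmx t ht).pow 2))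
  have hPc : ContinuousOn (fun p : ℝ × ℝ => hplus ψ υ (p.2 - L / 2))
      (Set.Icc 0 T ×ˢ Set.Icc 0 L) := (hpc.comp continuous_snd).continuousOn
  have hQc : ContinuousOn (fun p : ℝ × ℝ => hminus ψ υ (p.2 - L / 2))
      (Set.Icc 0 T ×ˢ Set.Icc 0 L) := (hmc.comp continuous_snd).continuousOn
  have hDc : ContinuousOn (fun p : ℝ × ℝ => D p.1 p.2) (Set.Icc 0 T ×ˢ Set.Icc 0 L) :=
    (continuousOn_const.mul ((hPc.mul (hδp.pow 2)).add (hQc.mul (hδm.pow 2)))).add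
      ((hPc.mul ((continuousOn_const.mul hδp).mul hcont.fst)).add
        (hQc.mul ((continuousOn_const.mul hδm).mul hcont.snd.snd.fst)))
  have slice : ∀ {f : ℝ × ℝ → ℝ}, ContinuousOn f (Set.Icc 0 T ×ˢ Set.Icc 0 L) →
      ∀ t ∈ Set.Icc 0 T, ContinuousOn (fun x => f (t, x)) (Set.Icc 0 L) := fun hf t ht =>
    hf.comp (f := fun x : ℝ => (t, x)) (by fun_prop) (fun x hx => ⟨ht, hx⟩)
  have hD : ∀ t ∈ Set.Icc 0 T, ∫ x in (0 : ℝ)..L, D t x ≤ 0 := by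
    intro t ht
    let Φ : ℝ → ℝ := fun x => hplus ψ υ (x - L / 2) * Λp t x * (δp t x) ^ 2
      + hminus ψ υ (x - L / 2) * Λm t x * (δm t x) ^ 2
    let Φ' : ℝ → ℝ := fun x =>
      ((-(ψ * (Real.sqrt υ * hplus ψ υ (x - L / 2)
          + (1 - Real.sqrt υ ^ 2) * Real.cosh (ψ * (x - L / 2)))) * Λp t x
        + hplus ψ υ (x - L / 2) * dxΛp t x) * (δp t x) ^ 2
        + hplus ψ υ (x - L / 2) * Λp t x * (2 * δp t x * dxp t x)
      + ((ψ * (Real.sqrt υ * hminus ψ υ (x - L / 2)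
          + (1 - Real.sqrt υ ^ 2) * Real.cosh (ψ * (x - L / 2))) * Λm t x
        + hminus ψ υ (x - L / 2) * dxΛm t x) * (δm t x) ^ 2
        + hminus ψ υ (x - L / 2) * Λm t x * (2 * δm t x * dxm t x)))
    have hΦ : ∀ x ∈ Set.Icc 0 L, HasDerivAt Φ (Φ' x) x := by
      intro x hx
      obtain ⟨-, h1, -, h2⟩ := hderiv t ht x hx
      obtain ⟨h3, h4⟩ := hΛderiv t ht x hx
      refine ((((hasDerivAt_hplus ψ υ L x).mul h3).mul (h1.pow 2)).add
        (((hasDerivAt_hminus ψ υ L x).mul h4).mul (h2.pow 2))).congr_deriv ?_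
      simp [Φ']
    have hΦc : ContinuousOn Φ' (Set.Icc 0 L) := by
      have c1 := hδpx t ht
      have c2 := hδmx t ht
      have c3 : ContinuousOn (Λp t) (Set.Icc 0 L) := fun x hx =>
        (hΛderiv t ht x hx).1.continuousAt.continuousWithinAt
      have c4 : ContinuousOn (Λm t) (Set.Icc 0 L) := fun x hx =>
        (hΛderiv t ht x hx).2.continuousAt.continuousWithinAt
      have c5 : ContinuousOn (dxp t) (Set.Icc 0 L) := slice hcont.snd.fst t ht
      have c6 : ContinuousOn (dxm t) (Set.Icc 0 L) := slice hcont.snd.snd.snd t ht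
      have c7 : ContinuousOn (dxΛp t) (Set.Icc 0 L) := slice hΛcont.fst t ht
      have c8 : ContinuousOn (dxΛm t) (Set.Icc 0 L) := slice hΛcont.snd t ht
      have c9 := hpc.continuousOn (s := Set.Icc 0 L)
      have c10 := hmc.continuousOn (s := Set.Icc 0 L)
      fun_prop
    have hΦi := hΦc.intervalIntegrable_of_Icc (μ := volume) hL.le
    have hftc : ∫ x in (0 : ℝ)..L, Φ' x = Φ L - Φ 0 :=
      intervalIntegral.integral_eq_sub_of_hasDerivAt
        (fun x hx => hΦ x (by rwa [Set.uIcc_of_le hL.le] at hx)) hΦi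
    have hle : ∫ x in (0 : ℝ)..L, D t x ≤ ∫ x in (0 : ℝ)..L, -Φ' x := by
      refine intervalIntegral.integral_mono_on hL.le
        ((slice hDc t ht).intervalIntegrable_of_Icc hL.le) hΦi.neg (fun x hx => ?_)
      obtain ⟨b1, -, -, b4, b5, b6⟩ := hΛbound t ht x hx
      exact pointwise_dissipation (hP x hx) (hQ x hx) (by unfold hplus hminus; ring)
        (Real.cosh_pos _) hs hs1 hψ hM hε₀ hsmall' b1 b4 b5 b6 (hG _ _).1 (hG _ _).2
        (hpde t ht x hx).1 (hpde t ht x hx).2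
    have h0mem : (0 : ℝ) ∈ Set.Icc 0 L := ⟨le_rfl, hL.le⟩
    have hLmem : L ∈ Set.Icc 0 L := ⟨hL.le, le_rfl⟩
    have hhalf : L - L / 2 = L / 2 := by ring
    have hPL := hP L hLmem
    have hQL := hQ L hLmem
    rw [hhalf] at hPL hQL
    have hΦL : 0 ≤ Φ L := by
      obtain ⟨b1, b2, b3, b4, -, -⟩ := hΛbound t ht L hLmem
      have := boundary_flux_nonneg (u := δp t L) (m := -Λm t L) hPL hQL hd hkL b1 (by linarith)
      simp only [Φ, hhalf, (hbc t ht).2]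
      linarith
    have hΦ0 : Φ 0 ≤ 0 := by
      obtain ⟨b1, b2, b3, b4, -, -⟩ := hΛbound t ht 0 h0mem
      have := boundary_flux_nonneg (u := δm t 0) (l := -Λm t 0) hPL hQL hd hk₀ (by linarith) b2
      -- the reflection `y ↦ -y` exchanges the two weights
      have r1 : hplus ψ υ (0 - L / 2) = hminus ψ υ (L / 2) := by
        rw [hminus_eq_hplus_neg, zero_sub]
      have r2 : hminus ψ υ (0 - L / 2) = hplus ψ υ (L / 2) := by
        rw [hminus_eq_hplus_neg, zero_sub, neg_neg]
      simp only [Φ, r1, r2, (hbc t ht).1]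
      linarith
    rw [intervalIntegral.integral_neg, hftc] at hle
    linarith
  have hexp : ∀ s : ℝ, HasDerivAt (fun s => Real.exp (k * s)) (Real.exp (k * s) * k) s := fun s => by
    simpa using ((hasDerivAt_id s).const_mul k).exp
  have main := integral_le_integral_of_deriv_nonpos (T := T) hL.le
    (f := fun s x => Real.exp (k * s) * W s x) (ft := fun s x => Real.exp (k * s) * D s x)
    (fun s hs => continuousOn_const.mul (hWx s hs))
    (fun s hs x hx => by
      obtain ⟨h1, -, h2, -⟩ := hderiv s hs x hx
      refine ((hexp s).mul (((h1.pow 2).const_mul (hplus ψ υ (x - L / 2))).add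
        ((h2.pow 2).const_mul (hminus ψ υ (x - L / 2))))).congr_deriv ?_
      simp [D, W]
      ring)
    (((by fun_prop : Continuous fun p : ℝ × ℝ => Real.exp (k * p.1)).continuousOn).mul hDc)
    (fun s hs => by
      rw [intervalIntegral.integral_const_mul]
      exact mul_nonpos_of_nonneg_of_nonpos (Real.exp_pos _).le (hD s hs))
    ht
  simp only [intervalIntegral.integral_const_mul, mul_zero, Real.exp_zero, one_mul] at main
  have hfin := mul_le_mul_of_nonneg_left main (Real.exp_pos (-k * t)).le
  rw [← mul_assoc, ← Real.exp_add, neg_mul, neg_add_cancel, Real.exp_zero, one_mul] at hfin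
  rw [neg_mul]
  simp only [W] at hfin
  linarith
end
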